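/- arXiv:1903.00909 — 4 statements merged into one kernel-verified Lean document; each statement's English description precedes it below -/
import Mathlib

section
/- Let P be a finite poset on {1,...,n}, and suppose a point x = (x_1,...,x_n) ∈ ℝ^n satisfies 2^{r−1} x_{i_1} − Σ_{j=2}^r 2^{r−j} x_{i_j} ≤ 1 for every saturated chain i_1 ⋖ ⋯ ⋖ i_r with i_r maximal, and −Σ_{j=1}^r 2^{r−j} x_{i_j} ≤ 1 for every maximal chain i_1 ⋖ ⋯ ⋖ i_r. Then |x_i| ≤ 1 for every i. -/
/-- A saturated chain `i_1 ⋖ ⋯ ⋖ i_r` whose top `i_r` is a maximal element. -/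
def IsSatChainToMax {P : Type*} [PartialOrder P] (l : List P) : Prop :=
  l ≠ [] ∧ l.Chain' (· ⋖ ·) ∧ (∃ a, l.getLast? = some a ∧ IsMax a)

/-- A maximal chain: a saturated chain from a minimal to a maximal element. -/
def IsMaxChainList {P : Type*} [PartialOrder P] (l : List P) : Prop :=
  l ≠ [] ∧ l.Chain' (· ⋖ ·) ∧
    (∃ a, l.head? = some a ∧ IsMin a) ∧ (∃ a, l.getLast? = some a ∧ IsMax a)

/-!
Write `S(i_1, …, i_r) = ∑ j, 2 ^ (r - j) * x i_j`, so that `S(a, l) = 2 ^ |l| * x a + S(l)`. The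
inequality (a) for the chain `a, l` reads `2 ^ |l| * x a ≤ 1 + S(l)`, and adding `S(l)` turns it
into `S(a, l) + 1 ≤ 2 * (S(l) + 1)`. Going down from the empty list at the top, where `S = 0`, this
gives `S(l) + 1 ≤ 2 ^ |l|`. Going up from the maximal chains, where `S + 1 ≥ 0` by (b), it gives
`S(l) + 1 ≥ 0` for every saturated chain `l` ending at a maximal element. Both bounds on `x a`
follow, as `2 ^ |l| * x a ≤ 1 + S(l) ≤ 2 ^ |l|` and
`2 ^ |l| * x a = (S(a, l) + 1) - (S(l) + 1) ≥ -2 ^ |l|`.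
-/

section Chains

variable {P : Type*} [PartialOrder P] {a b : P} {l : List P}

theorem isSatChainToMax_iff :
    IsSatChainToMax l ↔ l.IsChain (· ⋖ ·) ∧ ∃ a, l.getLast? = some a ∧ IsMax a :=
  and_iff_right_of_imp fun ⟨_, _, hlast, _⟩ hnil => by simp [hnil] at hlast

theorem isSatChainToMax_singleton : IsSatChainToMax [a] ↔ IsMax a := by
  simp [isSatChainToMax_iff]

theorem isSatChainToMax_cons_cons :
    IsSatChainToMax (a :: b :: l) ↔ a ⋖ b ∧ IsSatChainToMax (b :: l) := by
  simp [isSatChainToMax_iff, and_assoc]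

theorem isMaxChainList_cons :
    IsMaxChainList (a :: l) ↔ IsMin a ∧ IsSatChainToMax (a :: l) := by
  simp [IsMaxChainList, IsSatChainToMax, and_left_comm]

theorem exists_isSatChainToMax_cons [IsStronglyAtomic P] [WellFoundedGT P] (a : P) :
    ∃ l, IsSatChainToMax (a :: l) := by
  induction a using WellFoundedGT.induction with
  | ind a ih =>
    by_cases hmax : IsMax a
    · exact ⟨[], isSatChainToMax_singleton.2 hmax⟩
    · obtain ⟨c, hac⟩ := not_isMax_iff.1 hmax
      obtain ⟨b, hab, -⟩ := exists_covBy_le_of_lt hac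
      obtain ⟨l, hl⟩ := ih b hab.lt
      exact ⟨b :: l, isSatChainToMax_cons_cons.2 ⟨hab, hl⟩⟩

end Chains

/-- The sum `∑ j, 2 ^ (r - j) * x i_j` over a list `i_1, …, i_r`, in which every entry weighs twice
as much as the next one. It is the left-hand side of the inequalities (b) up to sign, and is defined
by recursion because the chains of the argument grow and shrink at their bottom element. -/
def dyadicSum {P R : Type*} [Semiring R] (x : P → R) : List P → R
  | [] => 0
  | a :: l => 2 ^ l.length * x a + dyadicSum x l

section SumFormulas

variable {P R : Type*}

theorem sum_two_pow_mul_get [Semiring R] (x : P → R) (l : List P) :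
    ∑ j : Fin l.length, 2 ^ (l.length - 1 - (j : ℕ)) * x (l.get j) = dyadicSum x l := by
  induction l with
  | nil => rfl
  | cons a l ih => simp [dyadicSum, ← ih, Fin.sum_univ_succ, Nat.sub_sub, add_comm]

theorem sum_ite_two_pow_mul_get_cons [Ring R] (x : P → R) (a : P) (l : List P) :
    ∑ j : Fin (a :: l).length,
        (if (j : ℕ) = 0 then (2 : R) ^ ((a :: l).length - 1)
          else -(2 : R) ^ ((a :: l).length - 1 - (j : ℕ))) * x ((a :: l).get j) =
      2 ^ l.length * x a - dyadicSum x l := by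
  simp [← sum_two_pow_mul_get, Fin.sum_univ_succ, Nat.sub_sub, add_comm, sub_eq_add_neg]

theorem dyadicSum_cons_add_one_le [CommRing R] [LinearOrder R] [IsStrictOrderedRing R]
    {x : P → R} {a : P} {l : List P}
    (h : 2 ^ l.length * x a - dyadicSum x l ≤ 1) :
    dyadicSum x (a :: l) + 1 ≤ 2 * (dyadicSum x l + 1) := by
  rw [dyadicSum]
  linarith

end SumFormulas

section Bounds

variable {P R : Type*} [PartialOrder P] [CommRing R] [LinearOrder R] [IsStrictOrderedRing R]
  {x : P → R} {l : List P}

theorem dyadicSum_add_one_le_two_pow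
    (ha : ∀ a l, IsSatChainToMax (a :: l) → 2 ^ l.length * x a - dyadicSum x l ≤ 1)
    {a : P} (hl : IsSatChainToMax (a :: l)) : dyadicSum x l + 1 ≤ 2 ^ l.length := by
  induction l generalizing a with
  | nil => simp [dyadicSum]
  | cons b m ih =>
    have hbm : IsSatChainToMax (b :: m) := (isSatChainToMax_cons_cons.1 hl).2
    calc dyadicSum x (b :: m) + 1 ≤ 2 * (dyadicSum x m + 1) :=
          dyadicSum_cons_add_one_le (ha b m hbm)
      _ ≤ 2 * 2 ^ m.length := by gcongr; exact ih hbm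
      _ = 2 ^ (b :: m).length := (pow_succ' 2 m.length).symm

theorem dyadicSum_add_one_nonneg [IsStronglyCoatomic P] [WellFoundedLT P]
    (ha : ∀ a l, IsSatChainToMax (a :: l) → 2 ^ l.length * x a - dyadicSum x l ≤ 1)
    (hb : ∀ l, IsMaxChainList l → 0 ≤ dyadicSum x l + 1)
    {a : P} (hl : IsSatChainToMax (a :: l)) : 0 ≤ dyadicSum x (a :: l) + 1 := by
  induction a using WellFoundedLT.induction generalizing l with
  | ind a ih =>
    by_cases hmin : IsMin a
    · exact hb _ (isMaxChainList_cons.2 ⟨hmin, hl⟩)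
    · obtain ⟨c, hca⟩ := not_isMin_iff.1 hmin
      obtain ⟨b, -, hba⟩ := exists_le_covBy_of_lt hca
      have hbal : IsSatChainToMax (b :: a :: l) := isSatChainToMax_cons_cons.2 ⟨hba, hl⟩
      have hdouble : 0 ≤ 2 * (dyadicSum x (a :: l) + 1) :=
        (ih b hba.lt hbal).trans (dyadicSum_cons_add_one_le (ha b _ hbal))
      exact nonneg_of_mul_nonneg_right hdouble two_pos

end Bounds

theorem stmt11_general {P R : Type*} [PartialOrder P] [WellFoundedLT P] [WellFoundedGT P]
    [CommRing R] [LinearOrder R] [IsStrictOrderedRing R] (x : P → R)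
    (ha : ∀ l : List P, IsSatChainToMax l →
      ∑ j : Fin l.length,
        (if (j : ℕ) = 0 then (2 : R) ^ (l.length - 1)
          else -(2 : R) ^ (l.length - 1 - (j : ℕ))) * x (l.get j) ≤ 1)
    (hb : ∀ l : List P, IsMaxChainList l →
      -∑ j : Fin l.length, (2 : R) ^ (l.length - 1 - (j : ℕ)) * x (l.get j) ≤ 1)
    (i : P) : |x i| ≤ 1 := by
  have ha' (a : P) (l : List P) (h : IsSatChainToMax (a :: l)) :
      2 ^ l.length * x a - dyadicSum x l ≤ 1 :=
    sum_ite_two_pow_mul_get_cons x a l ▸ ha _ h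
  have hb' (l : List P) (h : IsMaxChainList l) : 0 ≤ dyadicSum x l + 1 :=
    neg_le_iff_add_nonneg'.1 (sum_two_pow_mul_get x l ▸ hb l h)
  obtain ⟨l, hl⟩ := exists_isSatChainToMax_cons i
  have hxi := ha' i l hl
  have hupper : dyadicSum x l + 1 ≤ 2 ^ l.length := dyadicSum_add_one_le_two_pow ha' hl
  have hlower : 0 ≤ 2 ^ l.length * x i + dyadicSum x l + 1 := dyadicSum_add_one_nonneg ha' hb' hl
  have hpow : (0 : R) < 2 ^ l.length := by positivity
  refine abs_le.2 ⟨le_of_mul_le_mul_left ?_ hpow, le_of_mul_le_mul_left ?_ hpow⟩ <;> linarith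

/-- If `x ∈ ℝ^P` satisfies inequalities (a) over saturated chains ending at a
maximal element and (b) over maximal chains, then `|x_i| ≤ 1` for all `i`. -/
theorem stmt11 (P : Type*) [Fintype P] [PartialOrder P] (x : P → ℝ)
    (ha : ∀ l : List P, IsSatChainToMax l →
      ∑ j : Fin l.length,
        (if (j : ℕ) = 0 then (2 : ℝ) ^ (l.length - 1)
          else -(2 : ℝ) ^ (l.length - 1 - (j : ℕ))) * x (l.get j) ≤ 1)
    (hb : ∀ l : List P, IsMaxChainList l →
      -∑ j : Fin l.length, (2 : ℝ) ^ (l.length - 1 - (j : ℕ)) * x (l.get j) ≤ 1) :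
    ∀ i : P, |x i| ≤ 1 :=
  stmt11_general x ha hb
end

section
/- Let P be a finite poset on {1,...,n}, n ≥ 1. The number of facets of the enriched order polytope O^(e)_P equals sc(P) + mc(P), where sc(P) is the number of saturated chains of P ending at a maximal element of P, and mc(P) is the number of maximal chains of P. -/
/-- The set of minimal elements of a subset of a poset. -/
def minSet {P : Type*} [PartialOrder P] (S : Set P) : Set P :=
  {a | a ∈ S ∧ ∀ b ∈ S, b ≤ a → b = a}

/-- The vertex set of the enriched order polytope. -/
def enrichedOrderVerts (P : Type*) [PartialOrder P] : Set (P → ℝ) :=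
  {x | ∃ F : Set P, IsUpperSet F ∧
    (∀ i ∈ minSet F, x i = 1 ∨ x i = -1) ∧
    (∀ i ∈ F, i ∉ minSet F → x i = 1) ∧
    (∀ i, i ∉ F → x i = 0)}

/-- `F` is a facet of `S ⊆ ℝ^P`: a nonempty proper exposed face of affine
dimension `(card P) - 1`. -/
def IsFacetOf (P : Type*) [Fintype P] (S F : Set (P → ℝ)) : Prop :=
  F.Nonempty ∧ IsExposed ℝ S F ∧ F ≠ S ∧
    Module.finrank ℝ ↥(vectorSpan ℝ F) = Fintype.card P - 1

/-!
Every point `x` satisfying the inequalities `± x j ≤ chainBound x l` over all signed chains is an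
average of vertices. If `u j` is the least bound `chainBound x l` over the saturated chains
`j :: l` to a maximal element and `t = (x + u) / 2`, then `0 ≤ t ≤ u ≤ 1`, and `u j ≤ t k` whenever
`j < k`. Hence for each threshold `θ` the vector equal to `1` where `θ < t`, to `-1` where
`t ≤ θ < u` and to `0` elsewhere is a vertex, and its mean over `θ ∈ [0, 1)` is `2 t - u = x`.

No inequality is redundant. Given a chain `i :: l`, let `r` be a strictly monotone rank that prefers
an element of the chain to its competitors among the covers of a common element. At `1 - 2 ^ (-r)`
all inequalities are strict and `l` is the only chain giving the least bound at `i`, so moving the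
`i`-th coordinate makes the inequality of `± (i :: l)` tight and leaves the others strict.
A full-dimensional polyhedron has one facet for each inequality of an irredundant description.
-/

open Filter Topology MeasureTheory

section Polyhedron

/-- The intersection of the half-spaces `g i x ≤ c i`. -/
def polyhedron {E ι : Type*} [AddCommGroup E] [Module ℝ E] [TopologicalSpace E]
    (g : ι → StrongDual ℝ E) (c : ι → ℝ) : Set E :=
  {x | ∀ i, g i x ≤ c i}

/-- The face of a polyhedron on which its `i`-th defining inequality is tight. -/
def polyhedronFace {E ι : Type*} [AddCommGroup E] [Module ℝ E] [TopologicalSpace E]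
    (g : ι → StrongDual ℝ E) (c : ι → ℝ) (i : ι) : Set E :=
  {x ∈ polyhedron g c | g i x = c i}

theorem vectorSpan_le_ker {k V W : Type*} [Ring k] [AddCommGroup V] [Module k V] [AddCommGroup W]
    [Module k W] {f : V →ₗ[k] W} {s : Set V} (h : ∀ x ∈ s, ∀ y ∈ s, f x = f y) :
    vectorSpan k s ≤ f.ker := by
  rw [vectorSpan, Submodule.span_le]
  rintro _ ⟨x, hx, y, hy, rfl⟩
  simp [h x hx y hy]

variable {E ι : Type*} [AddCommGroup E] [Module ℝ E] [TopologicalSpace E]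
  {g : ι → StrongDual ℝ E} {c : ι → ℝ} {i : ι} {F : Set E} {p : E}

theorem mem_polyhedronFace_of_forall_ne_lt (hp : g i p = c i) (hlt : ∀ j ≠ i, g j p < c j) :
    p ∈ polyhedronFace g c i := by
  refine ⟨fun j => ?_, hp⟩
  rcases eq_or_ne j i with rfl | hj
  · exact hp.le
  · exact (hlt j hj).le

theorem convex_polyhedron : Convex ℝ (polyhedron g c) := by
  rw [polyhedron, Set.ofPred_forall]
  exact convex_iInter fun i => convex_halfSpace_le (g i).toLinearMap.isLinear _

theorem isExposed_polyhedronFace (i : ι) :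
    IsExposed ℝ (polyhedron g c) (polyhedronFace g c i) := by
  rintro ⟨p, hpS, hp⟩
  refine ⟨g i, Set.ext fun x => and_congr_right fun hx => ⟨fun h y hy => ?_, fun h => ?_⟩⟩
  · exact (hy i).trans_eq h.symm
  · exact (hx i).antisymm (hp.symm.trans_le (h p hpS))

theorem exists_pos_add_smul_mem_polyhedron [Finite ι] {d : E}
    (h : ∀ i, g i p < c i ∨ g i p = c i ∧ g i d = 0) :
    ∃ ε : ℝ, 0 < ε ∧ p + ε • d ∈ polyhedron g c := by
  have hev : ∀ᶠ ε : ℝ in 𝓝[>] 0, ∀ i, g i (p + ε • d) ≤ c i := by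
    refine eventually_all.2 fun i => ?_
    simp only [map_add, map_smul, smul_eq_mul]
    rcases h i with hlt | ⟨hp, hd⟩
    · have hcont : Continuous fun ε : ℝ => g i p + ε * g i d := by fun_prop
      have hnhds : ∀ᶠ ε : ℝ in 𝓝 0, g i p + ε * g i d < c i :=
        hcont.continuousAt.eventually_lt continuousAt_const (by simpa using hlt)
      exact (hnhds.filter_mono nhdsWithin_le_nhds).mono fun _ => le_of_lt
    · simp [hp, hd]
  obtain ⟨ε, hmem, hε⟩ := (hev.and self_mem_nhdsWithin).exists
  exact ⟨ε, hε, hmem⟩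

theorem vectorSpan_polyhedronFace [Finite ι] (hp : g i p = c i) (hlt : ∀ j ≠ i, g j p < c j) :
    vectorSpan ℝ (polyhedronFace g c i) = (g i).ker := by
  refine le_antisymm (vectorSpan_le_ker fun x hx y hy => hx.2.trans hy.2.symm) fun d hd => ?_
  have hd : g i d = 0 := hd
  obtain ⟨ε, hε, hmem⟩ : ∃ ε : ℝ, 0 < ε ∧ p + ε • d ∈ polyhedron g c := by
    refine exists_pos_add_smul_mem_polyhedron fun j => ?_
    rcases eq_or_ne j i with rfl | hj
    · exact .inr ⟨hp, hd⟩
    · exact .inl (hlt j hj)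
  have hface : p + ε • d ∈ polyhedronFace g c i := ⟨hmem, by simp [hp, hd]⟩
  have hspan := vsub_mem_vectorSpan ℝ hface (mem_polyhedronFace_of_forall_ne_lt hp hlt)
  rw [vsub_eq_sub, add_sub_cancel_left] at hspan
  exact (Submodule.smul_mem_iff _ hε.ne').1 hspan

theorem exists_mem_forall_lt [Finite ι] (hF : Convex ℝ F) (hne : F.Nonempty)
    (hsub : F ⊆ polyhedron g c) (h : ∀ i, ∃ q ∈ F, g i q < c i) :
    ∃ p ∈ F, ∀ i, g i p < c i := by
  suffices ∀ s : Set ι, s.Finite → ∃ p ∈ F, ∀ i ∈ s, g i p < c i by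
    simpa using this Set.univ Set.finite_univ
  intro s hs
  induction s, hs using Set.Finite.induction_on with
  | empty => exact hne.imp fun _ hp => ⟨hp, by simp⟩
  | @insert a s _ _ ih =>
    obtain ⟨p, hpF, hps⟩ := ih
    obtain ⟨q, hqF, hqa⟩ := h a
    refine ⟨midpoint ℝ p q, hF.midpoint_mem hpF hqF, fun i hi => ?_⟩
    have hp : g i p ≤ c i := hsub hpF i
    have hq : g i q ≤ c i := hsub hqF i
    simp only [midpoint_eq_smul_add, map_smul, map_add, smul_eq_mul, invOf_eq_inv]
    rcases hi with rfl | hi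
    · linarith
    · linarith [hps i hi]

theorem eq_polyhedron_of_isExtreme [Finite ι] (hF : IsExtreme ℝ (polyhedron g c) F) (hpF : p ∈ F)
    (hp : ∀ i, g i p < c i) : F = polyhedron g c := by
  refine hF.subset.antisymm fun y hy => ?_
  obtain ⟨ε, hε, hz⟩ : ∃ ε : ℝ, 0 < ε ∧ p + ε • (p - y) ∈ polyhedron g c :=
    exists_pos_add_smul_mem_polyhedron fun i => .inl (hp i)
  have hseg : p ∈ openSegment ℝ y (p + ε • (p - y)) := by
    refine ⟨ε / (1 + ε), 1 / (1 + ε), by positivity, by positivity, by field_simp; ring, ?_⟩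
    match_scalars <;> field_simp
    ring
  exact hF.left_mem_of_mem_openSegment hy hz hpF hseg

theorem exists_subset_polyhedronFace [Finite ι] (hF : IsExposed ℝ (polyhedron g c) F)
    (hne : F.Nonempty) (hproper : F ≠ polyhedron g c) : ∃ i, F ⊆ polyhedronFace g c i := by
  by_contra! hcon
  have hlt : ∀ i, ∃ q ∈ F, g i q < c i := fun i => by
    obtain ⟨q, hqF, hq⟩ := Set.not_subset.1 (hcon i)
    exact ⟨q, hqF, (hF.subset hqF i).lt_of_ne fun h => hq ⟨hF.subset hqF, h⟩⟩
  obtain ⟨p, hpF, hp⟩ := exists_mem_forall_lt (hF.convex convex_polyhedron) hne hF.subset hlt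
  exact hproper (eq_polyhedron_of_isExtreme hF.isExtreme hpF hp)

theorem eq_polyhedronFace_of_ker_le (hF : IsExposed ℝ (polyhedron g c) F) (hne : F.Nonempty)
    (hsub : F ⊆ polyhedronFace g c i) (hker : (g i).ker ≤ vectorSpan ℝ F) :
    F = polyhedronFace g c i := by
  refine hsub.antisymm fun x hx => ?_
  obtain ⟨q, hq⟩ := hne
  obtain ⟨f, hf⟩ := hF ⟨q, hq⟩
  have hmax : ∀ y ∈ F, ∀ z ∈ polyhedron g c, f z ≤ f y := fun y hy => (hf.subset hy).2
  have hfker : vectorSpan ℝ F ≤ f.ker := vectorSpan_le_ker fun y hy z hz =>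
    (hmax z hz y (hF.subset hy)).antisymm (hmax y hy z (hF.subset hz))
  have hxq : x - q ∈ (g i).ker := by simp [hx.2, (hsub hq).2]
  have hfx : f x = f q := sub_eq_zero.1 ((map_sub f x q).symm.trans (hfker (hker hxq)))
  rw [hf]
  exact ⟨hx.1, fun y hy => (hmax q hq y hy).trans_eq hfx.symm⟩

theorem setOf_facets_eq_range_polyhedronFace [FiniteDimensional ℝ E] [Finite ι] {z : E}
    (hz : ∀ i, g i z < c i) (hirr : ∀ i, ∃ p, g i p = c i ∧ ∀ j ≠ i, g j p < c j) :
    {F : Set E | F.Nonempty ∧ IsExposed ℝ (polyhedron g c) F ∧ F ≠ polyhedron g c ∧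
      Module.finrank ℝ (vectorSpan ℝ F) = Module.finrank ℝ E - 1} =
    Set.range (polyhedronFace g c) := by
  have hker : ∀ i, Module.finrank ℝ (g i).ker = Module.finrank ℝ E - 1 := fun i => by
    have hgi : (g i).toLinearMap ≠ 0 := fun h => by
      obtain ⟨p, hp, -⟩ := hirr i
      have hzero : ∀ x, g i x = 0 := fun x => LinearMap.congr_fun h x
      exact (hz i).ne (by rw [← hp, hzero, hzero])
    exact Nat.eq_sub_of_add_eq (Module.Dual.finrank_ker_add_one_of_ne_zero hgi)
  ext F
  constructor
  · rintro ⟨hne, hF, hproper, hdim⟩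
    obtain ⟨i, hi⟩ := exists_subset_polyhedronFace hF hne hproper
    have hspan : vectorSpan ℝ F = (g i).ker :=
      Submodule.eq_of_le_of_finrank_eq
        (vectorSpan_le_ker fun x hx y hy => (hi hx).2.trans (hi hy).2.symm)
        (hdim.trans (hker i).symm)
    exact ⟨i, (eq_polyhedronFace_of_ker_le hF hne hi hspan.ge).symm⟩
  · rintro ⟨i, rfl⟩
    obtain ⟨p, hp, hlt⟩ := hirr i
    refine ⟨⟨p, mem_polyhedronFace_of_forall_ne_lt hp hlt⟩, isExposed_polyhedronFace i,
      fun h => ?_, by rw [vectorSpan_polyhedronFace hp hlt, hker]⟩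
    have hzF : z ∈ polyhedronFace g c i := h ▸ fun j => (hz j).le
    exact (hz i).ne hzF.2

theorem polyhedronFace_injective (hirr : ∀ i, ∃ p, g i p = c i ∧ ∀ j ≠ i, g j p < c j) :
    Function.Injective (polyhedronFace g c) := fun i j hij => by
  obtain ⟨p, hp, hlt⟩ := hirr i
  have hpj : p ∈ polyhedronFace g c j := hij ▸ mem_polyhedronFace_of_forall_ne_lt hp hlt
  by_contra hne
  exact (hlt j (Ne.symm hne)).ne hpj.2

theorem ncard_facets_polyhedron [FiniteDimensional ℝ E] [Finite ι] {z : E}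
    (hz : ∀ i, g i z < c i) (hirr : ∀ i, ∃ p, g i p = c i ∧ ∀ j ≠ i, g j p < c j) :
    {F : Set E | F.Nonempty ∧ IsExposed ℝ (polyhedron g c) F ∧ F ≠ polyhedron g c ∧
      Module.finrank ℝ (vectorSpan ℝ F) = Module.finrank ℝ E - 1}.ncard = Nat.card ι := by
  rw [setOf_facets_eq_range_polyhedronFace hz hirr,
    Set.ncard_range_of_injective (polyhedronFace_injective hirr)]

end Polyhedron

section Chains

variable {P : Type*} [PartialOrder P] {j k : P} {l : List P}

namespace IsSatChainToMax

theorem iff_isChain : IsSatChainToMax l ↔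
    l ≠ [] ∧ l.IsChain (· ⋖ ·) ∧ ∃ a, l.getLast? = some a ∧ IsMax a :=
  Iff.rfl

theorem singleton_iff : IsSatChainToMax [j] ↔ IsMax j := by
  simp [iff_isChain]

theorem cons_cons_iff :
    IsSatChainToMax (j :: k :: l) ↔ j ⋖ k ∧ IsSatChainToMax (k :: l) := by
  simp [iff_isChain, List.isChain_cons_cons, and_assoc]

theorem pairwise_lt (hl : IsSatChainToMax l) : l.Pairwise (· < ·) :=
  List.isChain_iff_pairwise.1 (List.IsChain.imp (fun _ _ => CovBy.lt) hl.2.1)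

theorem head_lt (hl : IsSatChainToMax (j :: l)) : ∀ k ∈ l, j < k :=
  (List.pairwise_cons.1 hl.pairwise_lt).1

instance finite_subtype [Finite P] : Finite {l : List P // IsSatChainToMax l} := by
  have := Fintype.ofFinite P
  have hlen : {l : List P | IsSatChainToMax l} ⊆ {l | l.length ≤ Fintype.card P} :=
    fun l hl => List.Nodup.length_le_card (hl.pairwise_lt.imp ne_of_lt)
  exact ((List.finite_length_le P _).subset hlen).to_subtype

theorem exists_cons [Finite P] (j : P) : ∃ l, IsSatChainToMax (j :: l) := by
  induction j using WellFoundedGT.induction with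
  | ind j ih =>
    by_cases hj : IsMax j
    · exact ⟨[], singleton_iff.2 hj⟩
    · obtain ⟨b, hjb⟩ := not_isMax_iff.1 hj
      obtain ⟨k, hjk, -⟩ := exists_covBy_le_of_lt hjb
      obtain ⟨l, hl⟩ := ih k hjk.lt
      exact ⟨k :: l, cons_cons_iff.2 ⟨hjk, hl⟩⟩

end IsSatChainToMax

theorem isMaxChainList_cons_iff :
    IsMaxChainList (j :: l) ↔ IsMin j ∧ IsSatChainToMax (j :: l) := by
  simp only [IsMaxChainList, IsSatChainToMax, List.head?_cons, Option.some.injEq,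
    exists_eq_left']
  tauto

/-- The index of one defining inequality `sign * x head ≤ chainBound x tail` of the enriched
order polytope: a saturated chain to a maximal element, taken with sign `1`, or with sign `-1`
when it is a maximal chain. -/
structure SignedChain (P : Type*) [PartialOrder P] where
  sign : ℝ
  head : P
  tail : List P
  isSat : IsSatChainToMax (head :: tail)
  sign_eq : sign = 1 ∨ sign = -1 ∧ IsMin head

namespace SignedChain

/-- The signed chain given by a saturated chain to a maximal element or by a maximal chain. -/
def ofSum : {l : List P // IsSatChainToMax l} ⊕ {l : List P // IsMaxChainList l} → SignedChain P
  | .inl ⟨j :: l, hl⟩ => ⟨1, j, l, hl, .inl rfl⟩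
  | .inl ⟨[], hl⟩ => absurd rfl hl.1
  | .inr ⟨j :: l, hl⟩ =>
    ⟨-1, j, l, (isMaxChainList_cons_iff.1 hl).2, .inr ⟨rfl, (isMaxChainList_cons_iff.1 hl).1⟩⟩
  | .inr ⟨[], hl⟩ => absurd rfl hl.1

theorem ofSum_bijective : Function.Bijective (ofSum (P := P)) := by
  constructor
  · rintro (⟨_ | ⟨j, l⟩, hl⟩ | ⟨_ | ⟨j, l⟩, hl⟩) (⟨_ | ⟨k, m⟩, hm⟩ | ⟨_ | ⟨k, m⟩, hm⟩) h
    all_goals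
      first
      | exact absurd rfl hl.1
      | exact absurd rfl hm.1
      | simp_all [ofSum]
    all_goals norm_num at h
  · rintro ⟨s, j, l, hl, rfl | ⟨rfl, hj⟩⟩
    · exact ⟨.inl ⟨j :: l, hl⟩, rfl⟩
    · exact ⟨.inr ⟨j :: l, isMaxChainList_cons_iff.2 ⟨hj, hl⟩⟩, rfl⟩

end SignedChain

instance IsMaxChainList.finite_subtype [Finite P] : Finite {l : List P // IsMaxChainList l} :=
  .of_injective
    (Subtype.map (q := IsSatChainToMax) id fun _ hl => ⟨hl.1, hl.2.1, hl.2.2.2⟩)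
    (Subtype.map_injective _ Function.injective_id)

instance SignedChain.instFinite [Finite P] : Finite (SignedChain P) :=
  .of_surjective _ ofSum_bijective.surjective

theorem SignedChain.nat_card_eq [Finite P] :
    Nat.card (SignedChain P) =
      Nat.card {l : List P // IsSatChainToMax l} + Nat.card {l : List P // IsMaxChainList l} := by
  rw [← Nat.card_eq_of_bijective _ ofSum_bijective, Nat.card_sum]

end Chains

section ChainBound

/-- The linear part of `chainBound`. -/
noncomputable def chainFunctional {P : Type*} : List P → StrongDual ℝ (P → ℝ)
  | [] => 0
  | k :: l => (1 / 2 : ℝ) • (.proj k + chainFunctional l)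

/-- The upper bound `x k₁ / 2 + ⋯ + x kᵣ / 2 ^ r + 1 / 2 ^ r` that a saturated chain
`j ⋖ k₁ ⋖ ⋯ ⋖ kᵣ` to a maximal element imposes on `|x j|` over the enriched order polytope. -/
noncomputable def chainBound {P : Type*} (x : P → ℝ) (l : List P) : ℝ :=
  (1 / 2) ^ l.length + chainFunctional l x

section Arbitrary

variable {P : Type*} {x y : P → ℝ}

@[simp]
theorem chainBound_nil : chainBound x [] = 1 := by
  simp [chainBound, chainFunctional]

@[simp]
theorem chainBound_cons (k : P) (l : List P) :
    chainBound x (k :: l) = (x k + chainBound x l) / 2 := by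
  simp only [chainBound, chainFunctional, List.length_cons, pow_succ, smul_apply, add_apply,
    ContinuousLinearMap.proj_apply, smul_eq_mul]
  ring

theorem chainBound_mono {l : List P} (h : ∀ k ∈ l, x k ≤ y k) :
    chainBound x l ≤ chainBound y l := by
  induction l with
  | nil => simp
  | cons k l ih =>
    have hk : x k ≤ y k := h k List.mem_cons_self
    have hl : chainBound x l ≤ chainBound y l := ih fun m hm => h m (List.mem_cons_of_mem k hm)
    simp only [chainBound_cons]
    linarith

theorem chainBound_congr {l : List P} (h : ∀ k ∈ l, x k = y k) :
    chainBound x l = chainBound y l :=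
  (chainBound_mono fun k hk => (h k hk).le).antisymm (chainBound_mono fun k hk => (h k hk).ge)

theorem chainBound_le_one (h : ∀ k, x k ≤ 1) (l : List P) : chainBound x l ≤ 1 := by
  induction l with
  | nil => simp
  | cons k l ih =>
    rw [chainBound_cons]
    linarith [h k]

end Arbitrary

variable {P : Type*} [PartialOrder P] {x : P → ℝ}

namespace SignedChain

/-- The linear part of the inequality indexed by a signed chain. -/
noncomputable def functional (a : SignedChain P) : StrongDual ℝ (P → ℝ) :=
  a.sign • .proj a.head - chainFunctional a.tail

/-- The constant term of the inequality indexed by a signed chain. -/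
noncomputable def const (a : SignedChain P) : ℝ :=
  (1 / 2) ^ a.tail.length

theorem const_pos (a : SignedChain P) : 0 < a.const :=
  pow_pos one_half_pos _

theorem functional_sub_const (a : SignedChain P) :
    a.functional x - a.const = a.sign * x a.head - chainBound x a.tail := by
  simp only [functional, const, chainBound, sub_apply, smul_apply, ContinuousLinearMap.proj_apply,
    smul_eq_mul]
  ring

theorem functional_le_const_iff (a : SignedChain P) :
    a.functional x ≤ a.const ↔ a.sign * x a.head ≤ chainBound x a.tail := by
  rw [← sub_nonpos, functional_sub_const, sub_nonpos]

theorem functional_lt_const_iff (a : SignedChain P) :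
    a.functional x < a.const ↔ a.sign * x a.head < chainBound x a.tail := by
  rw [← sub_neg, functional_sub_const, sub_neg]

theorem functional_eq_const_iff (a : SignedChain P) :
    a.functional x = a.const ↔ a.sign * x a.head = chainBound x a.tail := by
  rw [← sub_eq_zero, functional_sub_const, sub_eq_zero]

theorem sign_mul_le_abs (a : SignedChain P) (v : ℝ) : a.sign * v ≤ |v| := by
  rcases a.sign_eq with h | ⟨h, -⟩ <;> simp [h, le_abs_self, neg_le_abs]

end SignedChain

theorem mem_polyhedron_iff :
    x ∈ polyhedron SignedChain.functional SignedChain.const ↔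
      ∀ a : SignedChain P, a.sign * x a.head ≤ chainBound x a.tail :=
  forall_congr' SignedChain.functional_le_const_iff

end ChainBound

section ConvexHull

variable {P : Type*} [PartialOrder P] {x t u : P → ℝ} {j k : P} {l : List P}

theorem mem_pi_of_mem_enrichedOrderVerts (hx : x ∈ enrichedOrderVerts P) :
    x ∈ Set.univ.pi fun _ : P => ({1, -1, 0} : Set ℝ) := by
  obtain ⟨F, -, hmin, hcomin, hcompl⟩ := hx
  intro j _
  by_cases hj : j ∈ F
  · by_cases hm : j ∈ minSet F
    · rcases hmin j hm with h | h <;> simp [h]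
    · simp [hcomin j hj hm]
  · simp [hcompl j hj]

theorem finite_enrichedOrderVerts [Finite P] : (enrichedOrderVerts P).Finite :=
  (Set.Finite.pi fun _ => Set.toFinite _).subset fun _ => mem_pi_of_mem_enrichedOrderVerts

theorem abs_le_one_of_mem_enrichedOrderVerts (hx : x ∈ enrichedOrderVerts P) (j : P) :
    |x j| ≤ 1 := by
  have hj : x j = 1 ∨ x j = -1 ∨ x j = 0 := mem_pi_of_mem_enrichedOrderVerts hx j (Set.mem_univ j)
  rcases hj with h | h | h <;> simp [h]

theorem eq_zero_or_eq_one_of_lt_of_mem_enrichedOrderVerts (hx : x ∈ enrichedOrderVerts P)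
    (hjk : j < k) : x j = 0 ∨ x k = 1 := by
  obtain ⟨F, hF, -, hcomin, hcompl⟩ := hx
  by_cases hj : j ∈ F
  · exact .inr (hcomin k (hF hjk.le hj) fun hk => hjk.ne (hk.2 j hj hjk.le))
  · exact .inl (hcompl j hj)

theorem abs_le_chainBound_of_mem_enrichedOrderVerts (hx : x ∈ enrichedOrderVerts P)
    (hl : IsSatChainToMax (j :: l)) : |x j| ≤ chainBound x l := by
  induction l generalizing j with
  | nil => simpa using abs_le_one_of_mem_enrichedOrderVerts hx j
  | cons k l ih =>
    obtain ⟨hjk, hk⟩ := IsSatChainToMax.cons_cons_iff.1 hl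
    have hbound : |x k| ≤ chainBound x l := ih hk
    rw [chainBound_cons]
    rcases eq_zero_or_eq_one_of_lt_of_mem_enrichedOrderVerts hx hjk.lt with hj | hk
    · rw [hj, abs_zero]
      linarith [neg_abs_le (x k)]
    · rw [hk, abs_one] at hbound
      linarith [abs_le_one_of_mem_enrichedOrderVerts hx j]

theorem enrichedOrderVerts_subset_polyhedron :
    enrichedOrderVerts P ⊆ polyhedron SignedChain.functional SignedChain.const := by
  refine fun x hx => mem_polyhedron_iff.2 fun a => ?_
  calc
    a.sign * x a.head ≤ |x a.head| := a.sign_mul_le_abs _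
    _ ≤ chainBound x a.tail := abs_le_chainBound_of_mem_enrichedOrderVerts hx a.isSat

theorem layer_mem_enrichedOrderVerts (htu : ∀ j, t j ≤ u j) (hut : ∀ j k, j < k → u j ≤ t k)
    (θ : ℝ) :
    (fun j => 2 * (Set.Iio (t j)).indicator 1 θ - (Set.Iio (u j)).indicator 1 θ) ∈
      enrichedOrderVerts P := by
  refine ⟨{j | θ < u j}, fun j k hjk hj => ?_, fun j hj => ?_, fun j hj hmin => ?_, fun j hj => ?_⟩
  · rcases hjk.eq_or_lt with rfl | hjk
    · exact hj
    · exact hj.trans_le ((hut j k hjk).trans (htu k))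
  · have hj : θ < u j := hj.1
    by_cases ht : θ < t j
    · left
      norm_num [ht, hj]
    · right
      simp [ht, hj]
  · have ht : θ < t j := by
      by_contra! ht
      refine hmin ⟨hj, fun k hk hkj => by_contra fun hne => ?_⟩
      exact (hk.trans_le (hut k j (hkj.lt_of_ne hne))).not_ge ht
    norm_num [ht, ht.trans_le (htu j)]
  · have hu : u j ≤ θ := not_lt.1 hj
    simp [hu, (htu j).trans hu]

theorem integral_indicator_Iio_one {a : ℝ} (ha : a ∈ Set.Icc (0 : ℝ) 1) :
    ∫ θ in Set.Ico (0 : ℝ) 1, (Set.Iio a).indicator 1 θ = a := by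
  have hinter : Set.Iio a ∩ Set.Ico 0 1 = Set.Ico 0 a := by
    rw [Set.inter_comm, Set.Ico_inter_Iio, min_eq_right ha.2]
  rw [integral_indicator_one measurableSet_Iio, measureReal_restrict_apply measurableSet_Iio,
    hinter, Real.volume_real_Ico_of_le ha.1, sub_zero]

-- Averaging the layers of `layer_mem_enrichedOrderVerts` over `θ ∈ [0, 1)` gives `2 t - u`.
theorem two_mul_sub_mem_convexHull [Finite P] (ht : ∀ j, 0 ≤ t j) (htu : ∀ j, t j ≤ u j)
    (hu : ∀ j, u j ≤ 1) (hut : ∀ j k, j < k → u j ≤ t k) :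
    (fun j => 2 * t j - u j) ∈ convexHull ℝ (enrichedOrderVerts P) := by
  have := Fintype.ofFinite P
  have hprob : IsProbabilityMeasure (volume.restrict (Set.Ico (0 : ℝ) 1)) := ⟨by simp⟩
  have hint (a : ℝ) : IntegrableOn ((Set.Iio a).indicator (1 : ℝ → ℝ)) (Set.Ico 0 1) :=
    (integrable_const (1 : ℝ)).indicator measurableSet_Iio
  have hlayer (j : P) : Integrable
      (fun θ : ℝ => 2 * (Set.Iio (t j)).indicator (1 : ℝ → ℝ) θ - (Set.Iio (u j)).indicator 1 θ)
      (volume.restrict (Set.Ico 0 1)) :=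
    ((hint (t j)).const_mul 2).sub (hint (u j))
  have havg := (convex_convexHull ℝ (enrichedOrderVerts P)).integral_mem
    (finite_enrichedOrderVerts.isClosed_convexHull ℝ)
    (.of_forall fun θ => subset_convexHull ℝ _ (layer_mem_enrichedOrderVerts htu hut θ))
    (Integrable.of_eval hlayer)
  convert havg using 1
  ext j
  rw [eval_integral hlayer, integral_sub ((hint _).const_mul 2) (hint _), integral_const_mul,
    integral_indicator_Iio_one ⟨ht j, (htu j).trans (hu j)⟩,
    integral_indicator_Iio_one ⟨(ht j).trans (htu j), hu j⟩]

/-- The least of the bounds on `|x j|` imposed by the saturated chains from `j` to a maximal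
element. -/
noncomputable def chainMin (x : P → ℝ) (j : P) : ℝ :=
  ⨅ l : {l : List P // IsSatChainToMax (j :: l)}, chainBound x l

instance finite_subtype_isSatChainToMax_cons [Finite P] :
    Finite {l : List P // IsSatChainToMax (j :: l)} :=
  .of_injective (fun l => (⟨j :: l, l.2⟩ : {l : List P // IsSatChainToMax l}))
    fun l m h => by simpa [Subtype.ext_iff] using h

theorem chainMin_le [Finite P] (hl : IsSatChainToMax (j :: l)) : chainMin x j ≤ chainBound x l :=
  ciInf_le (Set.finite_range _).bddBelow
    (⟨l, hl⟩ : {l : List P // IsSatChainToMax (j :: l)})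

theorem exists_chainBound_eq_chainMin [Finite P] (x : P → ℝ) (j : P) :
    ∃ l, IsSatChainToMax (j :: l) ∧ chainBound x l = chainMin x j := by
  have : Nonempty {l : List P // IsSatChainToMax (j :: l)} :=
    nonempty_subtype.2 (IsSatChainToMax.exists_cons j)
  obtain ⟨⟨l, hl⟩, h⟩ := exists_eq_ciInf_of_finite
    (f := fun l : {l : List P // IsSatChainToMax (j :: l)} => chainBound x l)
  exact ⟨l, hl, h⟩

theorem chainMin_le_of_covBy [Finite P] (hjk : j ⋖ k) :
    chainMin x j ≤ (x k + chainMin x k) / 2 := by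
  obtain ⟨l, hl, h⟩ := exists_chainBound_eq_chainMin x k
  rw [← h, ← chainBound_cons]
  exact chainMin_le (IsSatChainToMax.cons_cons_iff.2 ⟨hjk, hl⟩)

theorem chainMin_le_of_lt [Finite P] (hx : ∀ j, x j ≤ chainMin x j) (hjk : j < k) :
    chainMin x j ≤ (x k + chainMin x k) / 2 := by
  induction j using WellFoundedGT.induction with
  | ind j ih =>
    obtain ⟨m, hjm, hmk⟩ := exists_covBy_le_of_lt hjk
    have hcov : chainMin x j ≤ (x m + chainMin x m) / 2 := chainMin_le_of_covBy hjm
    rcases hmk.eq_or_lt with rfl | hmk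
    · exact hcov
    · linarith [ih m hjm.lt hmk, hx m]

theorem chainMin_le_one [Finite P] (hx : ∀ j, x j ≤ chainMin x j) (j : P) :
    chainMin x j ≤ 1 := by
  obtain ⟨m, hjm, hm⟩ := Finite.exists_le_maximal (p := fun _ : P => True) (a := j) trivial
  have hone : chainMin x m ≤ 1 := by
    simpa using chainMin_le (x := x)
      (IsSatChainToMax.singleton_iff.2 fun b hb => hm.2 trivial hb)
  rcases hjm.eq_or_lt with rfl | hjm
  · exact hone
  · linarith [chainMin_le_of_lt hx hjm, hx m]

theorem neg_le_chainMin [Finite P] (hx : ∀ j, x j ≤ chainMin x j)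
    (hmin : ∀ j, IsMin j → -x j ≤ chainMin x j) (j : P) : -x j ≤ chainMin x j := by
  obtain ⟨m, hmj, hm⟩ := Finite.exists_le_minimal (p := fun _ : P => True) (a := j) trivial
  have hm : -x m ≤ chainMin x m := hmin m fun b hb => hm.2 trivial hb
  rcases hmj.eq_or_lt with rfl | hmj
  · exact hm
  · linarith [chainMin_le_of_lt hx hmj, hx m]

theorem convexHull_enrichedOrderVerts [Finite P] :
    convexHull ℝ (enrichedOrderVerts P) =
      polyhedron SignedChain.functional SignedChain.const := by
  refine (convexHull_min enrichedOrderVerts_subset_polyhedron convex_polyhedron).antisymm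
    fun x hx => ?_
  have hle : ∀ j, x j ≤ chainMin x j := fun j => by
    obtain ⟨l, hl, h⟩ := exists_chainBound_eq_chainMin x j
    simpa [h] using mem_polyhedron_iff.1 hx ⟨1, j, l, hl, .inl rfl⟩
  have hmin : ∀ j, IsMin j → -x j ≤ chainMin x j := fun j hj => by
    obtain ⟨l, hl, h⟩ := exists_chainBound_eq_chainMin x j
    simpa [h] using mem_polyhedron_iff.1 hx ⟨-1, j, l, hl, .inr ⟨rfl, hj⟩⟩
  convert two_mul_sub_mem_convexHull (t := fun j => (x j + chainMin x j) / 2) (u := chainMin x)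
    (fun j => by linarith [neg_le_chainMin hle hmin j]) (fun j => by linarith [hle j])
    (chainMin_le_one hle) (fun j k => chainMin_le_of_lt hle) using 2 with j
  ring

end ConvexHull

section Irredundance

variable {P : Type*} [PartialOrder P] {x y : P → ℝ} {i j : P} {l l' : List P}

theorem exists_strictMono_nat_lt_of_covBy [Finite P] {C : Set P} (hC : IsChain (· ≤ ·) C) :
    ∃ r : P → ℕ, StrictMono r ∧ ∀ a b k, b ∈ C → a ⋖ b → a ⋖ k → k ≠ b → r b < r k := by
  -- The lexicographic order, first by the number of elements of `C` that are not above `p`, then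
  -- by the number of elements below `p`, prefers covers in `C` and is strictly monotone.
  set outside : P → ℕ := fun p => {c ∈ C | ¬p ≤ c}.ncard
  set below : P → ℕ := fun p => (Set.Iio p).ncard
  have hbelow_le : ∀ p, below p ≤ Nat.card P := fun p =>
    (Set.ncard_le_ncard (Set.subset_univ _)).trans_eq (Set.ncard_univ P)
  have houtside_mono : Monotone outside := fun p q hpq =>
    Set.ncard_le_ncard fun c hc => ⟨hc.1, fun hqc => hc.2 (hpq.trans hqc)⟩
  have hbelow_strictMono : StrictMono below := fun p q hpq =>
    Set.ncard_lt_ncard (Set.Iio_ssubset_Iio hpq)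
  refine ⟨fun p => (Nat.card P + 1) * outside p + below p,
    (houtside_mono.const_mul' _).add_strictMono hbelow_strictMono, fun a b k hb hab hak hne => ?_⟩
  have hkb : ¬k ≤ b := fun h => hab.2 hak.lt (h.lt_of_ne hne)
  have hsub : {c ∈ C | ¬b ≤ c} ⊆ {c ∈ C | ¬k ≤ c} := fun c hc =>
    ⟨hc.1, fun hkc => hkb (hkc.trans ((hC.total hb hc.1).resolve_left hc.2))⟩
  have houtside : outside b < outside k :=
    Set.ncard_lt_ncard (hsub.ssubset_of_mem_notMem (a := b) ⟨hb, hkb⟩ fun h => h.2 le_rfl)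
  calc
    (Nat.card P + 1) * outside b + below b < (Nat.card P + 1) * (outside b + 1) := by
      linarith [hbelow_le b]
    _ ≤ (Nat.card P + 1) * outside k := Nat.mul_le_mul_left _ houtside
    _ ≤ (Nat.card P + 1) * outside k + below k := Nat.le_add_right _ _

theorem half_one_add_le_chainBound (hx : ∀ k, x k ≤ 1)
    (hdec : ∀ j k, j ⋖ k → 2 * (1 - x k) ≤ 1 - x j) (hl : IsSatChainToMax (j :: l)) :
    (1 + x j) / 2 ≤ chainBound x l := by
  induction l generalizing j with
  | nil =>
    rw [chainBound_nil]
    linarith [hx j]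
  | cons k l ih =>
    obtain ⟨hjk, hk⟩ := IsSatChainToMax.cons_cons_iff.1 hl
    rw [chainBound_cons]
    linarith [hdec j k hjk, ih hk, hx k]

theorem chainBound_lt_of_ne (hx : ∀ k, x k < 1)
    (hdec : ∀ j k, j ⋖ k → 2 * (1 - x k) ≤ 1 - x j)
    (hbranch : ∀ a b k, b ∈ l → a ⋖ b → a ⋖ k → k ≠ b → 2 * (1 - x k) ≤ 1 - x b)
    (hl : IsSatChainToMax (j :: l)) (hl' : IsSatChainToMax (j :: l')) (hne : l' ≠ l) :
    chainBound x l < chainBound x l' := by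
  induction l generalizing j l' with
  | nil =>
    obtain ⟨k, m, rfl⟩ := List.exists_cons_of_ne_nil hne
    exact absurd (IsSatChainToMax.cons_cons_iff.1 hl').1.lt
      (IsSatChainToMax.singleton_iff.1 hl).not_lt
  | cons b l ih =>
    obtain ⟨hjb, hb⟩ := IsSatChainToMax.cons_cons_iff.1 hl
    rcases l' with _ | ⟨k, m⟩
    · exact absurd hjb.lt (IsSatChainToMax.singleton_iff.1 hl').not_lt
    obtain ⟨hjk, hk⟩ := IsSatChainToMax.cons_cons_iff.1 hl'
    simp only [chainBound_cons]
    rcases eq_or_ne k b with rfl | hkb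
    · have htail : chainBound x l < chainBound x m :=
        ih (fun a b k hb => hbranch a b k (List.mem_cons_of_mem _ hb)) hb hk
          fun h => hne (congrArg _ h)
      linarith
    · have hupper : chainBound x l ≤ 1 := chainBound_le_one (fun k => (hx k).le) l
      have hlower : (1 + x k) / 2 ≤ chainBound x m :=
        half_one_add_le_chainBound (fun k => (hx k).le) hdec hk
      linarith [hbranch j b k List.mem_cons_self hjb hjk hkb, hx k]

theorem exists_abs_lt_chainBound [Finite P] (hl : IsSatChainToMax (i :: l)) :
    ∃ x : P → ℝ, (∀ j m, IsSatChainToMax (j :: m) → |x j| < chainBound x m) ∧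
      ∀ m, IsSatChainToMax (i :: m) → m ≠ l → chainBound x l < chainBound x m := by
  have hsymm : Std.Symm fun a b : P => a ≤ b ∨ b ≤ a := ⟨fun _ _ => Or.symm⟩
  have hC : IsChain (· ≤ ·) {k | k ∈ l} :=
    ((List.pairwise_cons.1 hl.pairwise_lt).2.imp fun h => .inl h.le).set_pairwise
  obtain ⟨r, hr, hbranch⟩ := exists_strictMono_nat_lt_of_covBy hC
  have hhalve {a b : P} (h : r a < r b) : 2 * (1 / 2 : ℝ) ^ r b ≤ (1 / 2) ^ r a := by
    calc
      2 * (1 / 2 : ℝ) ^ r b ≤ 2 * (1 / 2) ^ (r a + 1) := by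
        gcongr ?_ * ?_
        exact pow_le_pow_of_le_one (by norm_num) (by norm_num) h
      _ = (1 / 2) ^ r a := by ring
  set x : P → ℝ := fun k => 1 - (1 / 2) ^ r k with hx
  have hlt : ∀ k, x k < 1 := fun k => sub_lt_self 1 (pow_pos one_half_pos _)
  have hnonneg : ∀ k, 0 ≤ x k := fun k =>
    sub_nonneg.2 (pow_le_one₀ one_half_pos.le one_half_lt_one.le)
  have hgap {a b : P} (h : r a < r b) : 2 * (1 - x b) ≤ 1 - x a := by
    simpa only [hx, sub_sub_cancel] using hhalve h
  have hdec : ∀ a b, a ⋖ b → 2 * (1 - x b) ≤ 1 - x a := fun a b h => hgap (hr h.lt)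
  refine ⟨x, fun j m hm => ?_, fun m hm hne => ?_⟩
  · have hlower : (1 + x j) / 2 ≤ chainBound x m :=
      half_one_add_le_chainBound (fun k => (hlt k).le) hdec hm
    rw [abs_of_nonneg (hnonneg j)]
    linarith [hlt j]
  · exact chainBound_lt_of_ne hlt hdec
      (fun a b k hb hab hak hne => hgap (hbranch a b k hb hab hak hne)) hl hm hne

theorem chainBound_update_head [DecidableEq P] (hl : IsSatChainToMax (i :: l)) (v : ℝ) :
    chainBound (Function.update y i v) l = chainBound y l :=
  chainBound_congr fun _ hk => Function.update_of_ne (hl.head_lt _ hk).ne' _ _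

theorem chainBound_le_chainBound_update [DecidableEq P] {v : ℝ} (hv : y i ≤ v ∨ IsMin i)
    (hl : IsSatChainToMax (j :: l)) :
    chainBound y l ≤ chainBound (Function.update y i v) l := by
  refine chainBound_mono fun k hk => ?_
  rcases eq_or_ne k i with rfl | hki
  · rw [Function.update_self]
    exact hv.resolve_right fun hmin => hmin.not_lt (hl.head_lt k hk)
  · rw [Function.update_of_ne hki]

theorem exists_eq_chainBound [Finite P] (a : SignedChain P) :
    ∃ x : P → ℝ, a.sign * x a.head = chainBound x a.tail ∧
      ∀ b ≠ a, b.sign * x b.head < chainBound x b.tail := by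
  classical
  obtain ⟨s, i, l, hl, hs⟩ := a
  obtain ⟨y, hy, hmin⟩ := exists_abs_lt_chainBound hl
  have hpos : 0 < chainBound y l := (abs_nonneg _).trans_lt (hy i l hl)
  have hsign : s * s = 1 := by rcases hs with rfl | ⟨rfl, -⟩ <;> norm_num
  have hv : y i ≤ s * chainBound y l ∨ IsMin i := by
    rcases hs with rfl | ⟨-, hi⟩
    · exact .inl (by linarith [le_abs_self (y i), hy i l hl])
    · exact .inr hi
  refine ⟨Function.update y i (s * chainBound y l), ?_, ?_⟩
  · simp only [Function.update_self, chainBound_update_head hl, ← mul_assoc, hsign, one_mul]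
  rintro ⟨s', j, m, hm, hs'⟩ hne
  dsimp only
  rcases eq_or_ne j i with rfl | hji
  · rw [Function.update_self, chainBound_update_head hm]
    rcases eq_or_ne m l with rfl | hml
    · have hopp : s' * s = -1 := by
        rcases hs with rfl | ⟨rfl, _⟩ <;> rcases hs' with rfl | ⟨rfl, _⟩ <;>
          first | exact absurd rfl hne | norm_num
      rw [← mul_assoc, hopp]
      linarith
    · calc
        s' * (s * chainBound y l) ≤ |s * chainBound y l| :=
          SignedChain.sign_mul_le_abs ⟨s', j, m, hm, hs'⟩ _
        _ = chainBound y l := by rcases hs with rfl | ⟨rfl, _⟩ <;> simp [hpos.le]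
        _ < chainBound y m := hmin m hm hml
  · rw [Function.update_of_ne hji]
    calc
      s' * y j ≤ |y j| := SignedChain.sign_mul_le_abs ⟨s', j, m, hm, hs'⟩ _
      _ < chainBound y m := hy j m hm
      _ ≤ chainBound (Function.update y i (s * chainBound y l)) m :=
        chainBound_le_chainBound_update hv hm

end Irredundance

/-- The number of facets of `O^(e)_P` is `sc(P) + mc(P)`. -/
theorem stmt12 (P : Type*) [Fintype P] [PartialOrder P] [Nonempty P] :
    Set.ncard {F : Set (P → ℝ) | IsFacetOf P (convexHull ℝ (enrichedOrderVerts P)) F}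
      = Nat.card {l : List P // IsSatChainToMax l}
        + Nat.card {l : List P // IsMaxChainList l} := by
  have hzero : ∀ a : SignedChain P, a.functional 0 < a.const := fun a => by
    simpa using a.const_pos
  have hirr : ∀ a : SignedChain P, ∃ x : P → ℝ,
      a.functional x = a.const ∧ ∀ b ≠ a, b.functional x < b.const := by
    simpa only [SignedChain.functional_eq_const_iff, SignedChain.functional_lt_const_iff] using
      exists_eq_chainBound (P := P)
  rw [← SignedChain.nat_card_eq, ← ncard_facets_polyhedron hzero hirr,
    Module.finrank_fintype_fun_eq_card, convexHull_enrichedOrderVerts]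
  rfl
end

section
/- Let P be a finite poset on {1,...,n}. The number of facets of the enriched chain polytope C^(e)_P equals Σ_{ℓ=0}^{n−1} 2^{ℓ+1} mc_ℓ(P), where mc_ℓ(P) is the number of maximal chains of P of length ℓ (i.e., with ℓ+1 elements). -/
/-- The vertex set of the enriched chain polytope: signed indicator vectors of
antichains. -/
def enrichedChainVerts (P : Type*) [PartialOrder P] : Set (P → ℝ) :=
  {x | ∃ A : Set P, IsAntichain (· ≤ ·) A ∧
    (∀ i ∈ A, x i = 1 ∨ x i = -1) ∧ (∀ i, i ∉ A → x i = 0)}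

/-!
A functional with coefficients `±1` on a maximal chain is at most `1` on the signed indicator of an
antichain, because a chain meets an antichain in at most one point. Conversely, suppose that `y`
satisfies all these inequalities, so that `|y|` has weight at most `1` on every chain, and let `φ i`
be the largest such weight of a chain below `i`. The intervals `(φ i - |y i|, φ i] ⊆ (0, 1]`
belonging to comparable elements are disjoint, so for each `t` the `i` whose interval contains `t`
form an antichain, and `y` is the average over `t ∈ (0, 1]` of signed indicators of these
antichains. Hence the polytope is cut out by the inequalities `g ≤ 1`, with `g` running over the
signed indicators of maximal chains. The face on which `g ≤ 1` is tight spans `ℝ^P` linearly, so it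
is a facet and determines `g`; every facet arises in this way, since averaging points of an exposed
face that lies in none of these hyperplanes produces an interior point of the polytope.
-/

open Set MeasureTheory

/-! ### Facets of polyhedra -/

section Affine

variable {k V : Type*}

theorem vectorSpan_le_ker_of_forall_eq [Ring k] [AddCommGroup V] [Module k V] {W : Type*}
    [AddCommGroup W] [Module k W] {F : Set V} {f : V →ₗ[k] W} {c : W} (h : ∀ x ∈ F, f x = c) :
    vectorSpan k F ≤ LinearMap.ker f := by
  rw [vectorSpan_def, Submodule.span_le]
  rintro _ ⟨x, hx, y, hy, rfl⟩
  simp [h x hx, h y hy]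

theorem finrank_span_le_finrank_vectorSpan_add_one [DivisionRing k] [AddCommGroup V] [Module k V]
    (F : Set V) :
    Module.finrank k (Submodule.span k F) ≤ Module.finrank k (vectorSpan k F) + 1 := by
  have h := finrank_vectorSpan_insert_le_set k F 0
  rwa [vectorSpan_eq_span_vsub_set_right k (mem_insert 0 F),
    show (fun x : V => x -ᵥ (0 : V)) = id from funext sub_zero, image_id,
    Submodule.span_insert_zero] at h

theorem exists_forall_lt_of_convexOn {ι E : Type*} [AddCommGroup E] [Module ℝ E] {F : Set E}
    (hF : F.Nonempty) {f : ι → E → ℝ} {c : ι → ℝ} (s : Finset ι)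
    (hf : ∀ i ∈ s, ConvexOn ℝ F (f i)) (hle : ∀ i ∈ s, ∀ x ∈ F, f i x ≤ c i)
    (hlt : ∀ i ∈ s, ∃ x ∈ F, f i x < c i) : ∃ x ∈ F, ∀ i ∈ s, f i x < c i := by
  classical
  induction s using Finset.induction_on with
  | empty => exact hF.imp fun x hx => ⟨hx, by simp⟩
  | insert j s _ ih =>
    simp only [Finset.forall_mem_insert] at hf hle hlt ⊢
    obtain ⟨y, hyF, hy⟩ := ih hf.2 hle.2 hlt.2
    obtain ⟨z, hzF, hz⟩ := hlt.1
    have midpoint_le {i : ι} (hi : ConvexOn ℝ F (f i)) :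
        f i ((1 / 2 : ℝ) • y + (1 / 2 : ℝ) • z) ≤ 1 / 2 * f i y + 1 / 2 * f i z :=
      hi.2 hyF hzF (by norm_num) (by norm_num) (by norm_num)
    refine ⟨(1 / 2 : ℝ) • y + (1 / 2 : ℝ) • z,
      hf.1.1 hyF hzF (by norm_num) (by norm_num) (by norm_num), ?_, fun i hi => ?_⟩
    · linarith [midpoint_le hf.1, hle.1 y hyF]
    · linarith [midpoint_le (hf.2 i hi), hy i hi, hle.2 i hi z hzF]

end Affine

section Exposed

variable {E : Type*} [NormedAddCommGroup E] [NormedSpace ℝ E] {S F F' : Set E}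

theorem eq_of_isExposed_of_mem_interior (hF : IsExposed ℝ S F) {x : E} (hxF : x ∈ F)
    (hxS : x ∈ interior S) : F = S := by
  obtain ⟨l, rfl⟩ := hF ⟨x, hxF⟩
  have hmax : IsLocalMax l x :=
    Filter.mem_of_superset (mem_interior_iff_mem_nhds.1 hxS) hxF.2
  have hl : l = 0 := hmax.hasFDerivAt_eq_zero l.hasFDerivAt
  simp [hl]

theorem eq_of_isExposed_of_vectorSpan_le (hF : IsExposed ℝ S F) (hne : F.Nonempty) (hFF' : F ⊆ F')
    (hF'S : F' ⊆ S) (hspan : vectorSpan ℝ F' ≤ vectorSpan ℝ F) : F = F' := by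
  obtain ⟨x, hx⟩ := hne
  obtain ⟨l, rfl⟩ := hF ⟨x, hx⟩
  refine hFF'.antisymm fun y hy => ⟨hF'S hy, ?_⟩
  have hker : vectorSpan ℝ {x ∈ S | ∀ y ∈ S, l y ≤ l x} ≤ LinearMap.ker l.toLinearMap :=
    vectorSpan_le_ker_of_forall_eq (c := l x) fun z hz =>
      le_antisymm (hx.2 z hz.1) (hz.2 x hx.1)
  have hyx : l (y - x) = 0 := hker (hspan (vsub_mem_vectorSpan ℝ hy (hFF' hx)))
  have hlyx : l y = l x := by rwa [map_sub, sub_eq_zero] at hyx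
  exact hlyx ▸ hx.2

/-- The one-sided polar of a set `G` of continuous functionals: the intersection of the half-spaces
`g x ≤ 1`. A polytope with the origin in its interior is presented by its facet inequalities in
this way. -/
def oneSidedPolar (G : Set (StrongDual ℝ E)) : Set E := {x | ∀ g ∈ G, g x ≤ 1}

/-- The face of the one-sided polar of `G` on which the inequality `g x ≤ 1` is tight. -/
def polarFace (G : Set (StrongDual ℝ E)) (g : StrongDual ℝ E) : Set E :=
  {x ∈ oneSidedPolar G | g x = 1}

variable {G : Set (StrongDual ℝ E)} {g : StrongDual ℝ E}

theorem zero_mem_oneSidedPolar : (0 : E) ∈ oneSidedPolar G := fun g _ => by simp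

theorem convex_oneSidedPolar : Convex ℝ (oneSidedPolar G) := by
  simp only [oneSidedPolar, ofPred_forall]
  exact convex_iInter₂ fun g _ => convex_halfSpace_le g.toLinearMap.isLinear 1

theorem mem_interior_oneSidedPolar (hG : G.Finite) {x : E} (hx : ∀ g ∈ G, g x < 1) :
    x ∈ interior (oneSidedPolar G) := by
  have hopen : IsOpen (⋂ g ∈ G, {y : E | g y < 1}) :=
    hG.isOpen_biInter fun g _ => isOpen_lt g.continuous continuous_const
  exact interior_maximal (fun y hy g hg => (mem_iInter₂.1 hy g hg).le) hopen (mem_iInter₂.2 hx)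

theorem polarFace_ne_oneSidedPolar : polarFace G g ≠ oneSidedPolar G := fun h => by
  have h0 : (0 : E) ∈ polarFace G g := h ▸ zero_mem_oneSidedPolar
  simpa using h0.2

theorem isExposed_polarFace (hg : g ∈ G) : IsExposed ℝ (oneSidedPolar G) (polarFace G g) := by
  rintro ⟨x, hx⟩
  refine ⟨g, Subset.antisymm (fun y hy => ⟨hy.1, fun z hz => hy.2 ▸ hz g hg⟩)
    fun y hy => ⟨hy.1, le_antisymm (hy.1 g hg) ?_⟩⟩
  exact hx.2 ▸ hy.2 x hx.1

theorem exists_subset_polarFace (hG : G.Finite) (hF : IsExposed ℝ (oneSidedPolar G) F)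
    (hne : F.Nonempty) (hproper : F ≠ oneSidedPolar G) : ∃ g ∈ G, F ⊆ polarFace G g := by
  by_contra! hcon
  have hconvex : Convex ℝ F := hF.convex convex_oneSidedPolar
  have hlt : ∀ g ∈ hG.toFinset, ∃ x ∈ F, g x < 1 := fun g hg => by
    obtain ⟨x, hxF, hx⟩ := not_subset.1 (hcon g (hG.mem_toFinset.1 hg))
    have hxG := hF.subset hxF
    exact ⟨x, hxF, lt_of_le_of_ne (hxG g (hG.mem_toFinset.1 hg)) fun h => hx ⟨hxG, h⟩⟩
  obtain ⟨x, hxF, hx⟩ := exists_forall_lt_of_convexOn hne hG.toFinset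
    (fun g _ => g.toLinearMap.convexOn hconvex)
    (fun g hg x hx => hF.subset hx g (hG.mem_toFinset.1 hg)) hlt
  exact hproper (eq_of_isExposed_of_mem_interior hF hxF
    (mem_interior_oneSidedPolar hG fun g hg => hx g (hG.mem_toFinset.2 hg)))

theorem injOn_polarFace (hspan : ∀ g ∈ G, Submodule.span ℝ (polarFace G g) = ⊤) :
    InjOn (polarFace G) G := fun g hg g' _ h =>
  ContinuousLinearMap.coe_injective <| LinearMap.ext_on (hspan g hg) fun x hx =>
    hx.2.trans (h ▸ hx : x ∈ polarFace G g').2.symm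

variable [FiniteDimensional ℝ E]

theorem finrank_vectorSpan_polarFace_add_one_le (hne : (polarFace G g).Nonempty) :
    Module.finrank ℝ (vectorSpan ℝ (polarFace G g)) + 1 ≤ Module.finrank ℝ E := by
  have hg : g.toLinearMap ≠ 0 := by
    rintro h
    obtain ⟨x, hx⟩ := hne
    have hx0 : g x = 0 := LinearMap.congr_fun h x
    exact one_ne_zero (hx.2.symm.trans hx0)
  rw [← Module.Dual.finrank_ker_add_one_of_ne_zero hg]
  exact Nat.succ_le_succ
    (Submodule.finrank_mono (vectorSpan_le_ker_of_forall_eq fun x hx => hx.2))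

theorem exists_eq_polarFace (hG : G.Finite) (hF : IsExposed ℝ (oneSidedPolar G) F)
    (hne : F.Nonempty) (hproper : F ≠ oneSidedPolar G)
    (hdim : Module.finrank ℝ E ≤ Module.finrank ℝ (vectorSpan ℝ F) + 1) :
    ∃ g ∈ G, F = polarFace G g := by
  obtain ⟨g, hg, hFg⟩ := exists_subset_polarFace hG hF hne hproper
  have hspan : vectorSpan ℝ F = vectorSpan ℝ (polarFace G g) :=
    Submodule.eq_of_le_of_finrank_le (vectorSpan_mono ℝ hFg) <| Nat.succ_le_succ_iff.1 <|
      (finrank_vectorSpan_polarFace_add_one_le (hne.mono hFg)).trans hdim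
  exact ⟨g, hg, eq_of_isExposed_of_vectorSpan_le hF hne hFg (sep_subset _ _) hspan.ge⟩

theorem ncard_setOf_isFacetOf_oneSidedPolar {P : Type*} [Fintype P] [Nonempty P]
    {G : Set (StrongDual ℝ (P → ℝ))} (hG : G.Finite)
    (hspan : ∀ g ∈ G, Submodule.span ℝ (polarFace G g) = ⊤) :
    {F | IsFacetOf P (oneSidedPolar G) F}.ncard = G.ncard := by
  have hfinrank := Module.finrank_fintype_fun_eq_card ℝ (η := P)
  have hcard := Fintype.card_pos (α := P)
  suffices {F | IsFacetOf P (oneSidedPolar G) F} = polarFace G '' G by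
    rw [this, (injOn_polarFace hspan).ncard_image]
  ext F
  constructor
  · rintro ⟨hne, hexp, hproper, hdim⟩
    obtain ⟨g, hg, rfl⟩ := exists_eq_polarFace hG hexp hne hproper (by omega)
    exact ⟨g, hg, rfl⟩
  · rintro ⟨g, hg, rfl⟩
    have hne : (polarFace G g).Nonempty := by
      rw [nonempty_iff_ne_empty]
      intro hempty
      have := hspan g hg
      simp [hempty] at this
    have hle := finrank_vectorSpan_polarFace_add_one_le hne
    have hge := finrank_span_le_finrank_vectorSpan_add_one (k := ℝ) (polarFace G g)
    rw [hspan g hg, finrank_top] at hge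
    exact ⟨hne, isExposed_polarFace hg, polarFace_ne_oneSidedPolar, by omega⟩

end Exposed

/-! ### Signed indicator vectors -/

/-- The sign of a real number, with the value `1` at `0` so that it is always a unit. -/
noncomputable def unitSign (a : ℝ) : ℝ := if 0 ≤ a then 1 else -1

theorem unitSign_eq_or (a : ℝ) : unitSign a = 1 ∨ unitSign a = -1 := ite_eq_or_eq ..

theorem unitSign_mul_abs (a : ℝ) : unitSign a * |a| = a := by
  rcases le_or_gt 0 a with h | h
  · simp [unitSign, h, abs_of_nonneg]
  · simp [unitSign, h.not_ge, abs_of_neg h]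

theorem unitSign_mul_self (a : ℝ) : unitSign a * a = |a| := by
  rcases le_or_gt 0 a with h | h
  · simp [unitSign, h, abs_of_nonneg]
  · simp [unitSign, h.not_ge, abs_of_neg h]

/-- The vectors `e^ε_s = ∑_{i ∈ s} ε_i e_i` attached to the sign vectors `ε ∈ {−1,1}^s`. -/
def signedIndicators {P : Type*} (s : Set P) : Set (P → ℝ) :=
  {x | (∀ i ∈ s, x i = 1 ∨ x i = -1) ∧ ∀ i, i ∉ s → x i = 0}

section SignedIndicators

variable {P : Type*} {s t : Set P} {x y : P → ℝ}

theorem indicator_unitSign_mem_signedIndicators (s : Set P) (y : P → ℝ) :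
    s.indicator (fun i => unitSign (y i)) ∈ signedIndicators s :=
  ⟨fun i hi => by simpa only [indicator_of_mem hi] using unitSign_eq_or (y i),
    fun i hi => indicator_of_notMem hi _⟩

theorem support_eq_of_mem_signedIndicators (hx : x ∈ signedIndicators s) : x.support = s := by
  ext i
  refine ⟨fun hi => by_contra fun his => hi (hx.2 i his), fun hi => ?_⟩
  rcases hx.1 i hi with h | h <;> simp [h]

theorem mul_self_of_mem_signedIndicators (hx : x ∈ signedIndicators s) {i : P} (hi : i ∈ s) :
    x i * x i = 1 := by
  rcases hx.1 i hi with h | h <;> simp [h]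

theorem abs_le_one_of_mem_signedIndicators (hx : x ∈ signedIndicators s) (i : P) : |x i| ≤ 1 := by
  by_cases hi : i ∈ s
  · rcases hx.1 i hi with h | h <;> simp [h]
  · simp [hx.2 i hi]

theorem single_mem_signedIndicators [DecidableEq P] {i : P} {a : ℝ} (ha : a = 1 ∨ a = -1) :
    Pi.single i a ∈ signedIndicators {i} := by
  refine ⟨?_, fun j hj => by rw [Pi.single_eq_of_ne hj]⟩
  rintro _ rfl
  rwa [Pi.single_eq_same]

theorem add_mem_signedIndicators_union (hst : Disjoint s t) (hx : x ∈ signedIndicators s)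
    (hy : y ∈ signedIndicators t) : x + y ∈ signedIndicators (s ∪ t) := by
  refine ⟨?_, fun i hi => ?_⟩
  · rintro i (hi | hi)
    · simpa [hy.2 i (hst.notMem_of_mem_left hi)] using hx.1 i hi
    · simpa [hx.2 i (hst.notMem_of_mem_right hi)] using hy.1 i hi
  · rw [mem_union, not_or] at hi
    simp [hx.2 i hi.1, hy.2 i hi.2]

theorem pairwise_disjoint_signedIndicators :
    Pairwise (Function.onFun Disjoint (signedIndicators (P := P))) := fun _ _ hst =>
  disjoint_left.2 fun _ hx hy => hst <|
    (support_eq_of_mem_signedIndicators hx).symm.trans (support_eq_of_mem_signedIndicators hy)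

theorem dotProduct_le_one_of_subsingleton_inter [Fintype P] (hst : (s ∩ t).Subsingleton)
    (hx : x ∈ signedIndicators s) (hy : y ∈ signedIndicators t) : x ⬝ᵥ y ≤ 1 := by
  have hzero {i : P} (hi : i ∉ s ∩ t) : x i * y i = 0 := by
    by_cases his : i ∈ s
    · rw [hy.2 i fun hit => hi ⟨his, hit⟩, mul_zero]
    · rw [hx.2 i his, zero_mul]
  rcases (s ∩ t).eq_empty_or_nonempty with h | ⟨i, hi⟩
  · have hxy : x ⬝ᵥ y = 0 := Finset.sum_eq_zero fun j _ => hzero (h ▸ notMem_empty j)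
    exact hxy.trans_le zero_le_one
  · calc x ⬝ᵥ y = x i * y i :=
          Fintype.sum_eq_single i fun j hji => hzero fun hj => hji (hst hj hi)
      _ ≤ |x i| * |y i| := (le_abs_self _).trans_eq (abs_mul _ _)
      _ ≤ 1 := mul_le_one₀ (abs_le_one_of_mem_signedIndicators hx i) (abs_nonneg _)
          (abs_le_one_of_mem_signedIndicators hy i)

theorem signedIndicators_eq_coe_piFinset [Fintype P] [DecidableEq P] (s : Set P)
    [DecidablePred (· ∈ s)] : signedIndicators s =
      Fintype.piFinset fun i => if i ∈ s then ({1, -1} : Finset ℝ) else {0} := by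
  ext x
  simp only [signedIndicators, mem_ofPred_eq, Finset.mem_coe, Fintype.mem_piFinset,
    ← forall_and]
  refine forall_congr' fun i => ?_
  by_cases hi : i ∈ s <;> simp [hi]

theorem finite_signedIndicators [Finite P] (s : Set P) : (signedIndicators s).Finite := by
  classical
  have := Fintype.ofFinite P
  rw [signedIndicators_eq_coe_piFinset]
  exact Finset.finite_toSet _

theorem ncard_signedIndicators [Finite P] (s : Set P) :
    (signedIndicators s).ncard = 2 ^ s.ncard := by
  classical
  have := Fintype.ofFinite P
  have hcard (i : P) :
      (if i ∈ s then ({1, -1} : Finset ℝ) else {0}).card = if i ∈ s.toFinset then 2 else 1 := by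
    by_cases hi : i ∈ s
    · simpa [hi] using Finset.card_pair (show (1 : ℝ) ≠ -1 by norm_num)
    · simp [hi]
  rw [signedIndicators_eq_coe_piFinset, ncard_coe_finset, Fintype.card_piFinset,
    ncard_eq_toFinset_card']
  simp only [hcard, Fintype.prod_ite_mem, Finset.prod_const]

end SignedIndicators

/-! ### Maximal chains -/

section MaximalChains

variable {P : Type*} [PartialOrder P]

theorem IsMaxChainList.sortedLT {l : List P} (h : IsMaxChainList l) : l.SortedLT :=
  (List.IsChain.imp (fun _ _ hab => hab.lt) h.2.1).sortedLT

theorem IsMaxChainList.length_pos {l : List P} (hl : IsMaxChainList l) : 0 < l.length :=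
  List.length_pos_iff.2 hl.1

theorem mem_or_getLast_lt_of_isChain_covBy {j a : P} {t : List P}
    (ht : List.IsChain (· ⋖ ·) (a :: t)) (ha : a ≤ j) (hj : ∀ b ∈ t, b ≤ j ∨ j ≤ b) :
    j ∈ a :: t ∨ (a :: t).getLast (List.cons_ne_nil a t) < j := by
  induction t generalizing a with
  | nil => exact ha.eq_or_lt.imp (fun h => by simp [h]) id
  | cons b t ih =>
    obtain ⟨hab, ht⟩ := List.isChain_cons_cons.1 ht
    simp only [List.forall_mem_cons] at hj
    by_cases hb : b ≤ j
    · exact (ih ht hb hj.2).imp (List.mem_cons_of_mem a) id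
    · have hjb : j < b := (hj.1.resolve_left hb).lt_of_not_ge hb
      have haj : a = j := ha.eq_of_not_lt fun h => hab.2 h hjb
      exact Or.inl (haj ▸ List.mem_cons_self)

theorem IsMaxChainList.mem_of_forall_le_or_ge {l : List P} (hl : IsMaxChainList l) {j : P}
    (hj : ∀ b ∈ l, b ≤ j ∨ j ≤ b) : j ∈ l := by
  obtain ⟨-, hchain, ⟨a, ha, hmin⟩, b, hb, hmax⟩ := hl
  obtain ⟨t, rfl⟩ := List.head?_eq_some_iff.1 ha
  rw [List.getLast?_eq_some_getLast (List.cons_ne_nil a t), Option.some_inj] at hb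
  rw [List.forall_mem_cons] at hj
  exact (mem_or_getLast_lt_of_isChain_covBy hchain (hj.1.elim id (hmin ·)) hj.2).resolve_right
    fun hlt => hmax.not_lt (hb ▸ hlt)

theorem IsMaxChainList.isMaxChain {l : List P} (hl : IsMaxChainList l) :
    IsMaxChain (· ≤ ·) {a | a ∈ l} := by
  refine ⟨?_, fun t ht hlt => hlt.antisymm fun j hj =>
    hl.mem_of_forall_le_or_ge fun b hb => ht.total (hlt hb) hj⟩
  rw [← range_list_get]
  exact hl.sortedLT.strictMono_get.monotone.isChain_range

/-- The flag consisting of the members of a maximal chain that is given as a list. -/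
def IsMaxChainList.toFlag {l : List P} (hl : IsMaxChainList l) : Flag P :=
  Flag.ofIsMaxChain {a | a ∈ l} hl.isMaxChain

theorem isMin_coe_of_isMin {C : Flag P} {a : C} (ha : IsMin a) : IsMin (a : P) := by
  intro b hb
  have hle (c : P) (hc : c ∈ C) : b ≤ c :=
    hb.trans ((C.le_or_le a.2 hc).elim id (ha (b := ⟨c, hc⟩) ·))
  have hbC : b ∈ C := Flag.mem_iff_forall_le_or_ge.2 fun c hc => Or.inl (hle c hc)
  exact ha (b := ⟨b, hbC⟩) hb

theorem isMax_coe_of_isMax {C : Flag P} {a : C} (ha : IsMax a) : IsMax (a : P) := by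
  intro b hb
  have hle (c : P) (hc : c ∈ C) : c ≤ b :=
    ((C.le_or_le hc a.2).elim id (ha (b := ⟨c, hc⟩) ·)).trans hb
  have hbC : b ∈ C := Flag.mem_iff_forall_le_or_ge.2 fun c hc => Or.inr (hle c hc)
  exact ha (b := ⟨b, hbC⟩) hb

theorem coe_covBy_coe_of_covBy {C : Flag P} {a b : C} (h : a ⋖ b) : (a : P) ⋖ b := by
  classical
  refine ⟨h.1, fun c hac hcb => ?_⟩
  have hcC : c ∈ C := Flag.mem_iff_forall_le_or_ge.2 fun d hd => by
    rcases le_or_gt (⟨d, hd⟩ : C) a with hda | had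
    · exact Or.inr (le_trans hda hac.le)
    · exact Or.inl (hcb.le.trans (h.ge_of_gt had))
  exact h.2 (c := ⟨c, hcC⟩) hac hcb

theorem injective_toFlag :
    Function.Injective fun l : {l : List P // IsMaxChainList l} => l.2.toFlag := fun l l' h =>
  Subtype.ext <| l.2.sortedLT.eq_of_mem_iff l'.2.sortedLT <|
    Set.ext_iff.1 (congrArg (fun C : Flag P => (C : Set P)) h)

theorem isMaxChainList_ofFn {C : Flag P} {n : ℕ} (e : Fin (n + 1) ≃o C) :
    IsMaxChainList (List.ofFn fun k => (e k : P)) := by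
  have hne : (List.ofFn fun k => (e k : P)) ≠ [] := by simp
  refine ⟨hne, ?_, ⟨e 0, by simp, isMin_coe_of_isMin ?_⟩,
    ⟨e (Fin.last n), ?_, isMax_coe_of_isMax ?_⟩⟩
  · refine List.isChain_ofFn.2 fun k hk => coe_covBy_coe_of_covBy ?_
    rw [apply_covBy_apply_iff, Fin.covBy_iff]
    exact Order.covBy_add_one k
  · exact e.isMin_apply.2 isMin_bot
  · rw [List.getLast?_eq_some_getLast hne, List.getLast_ofFn]
    rfl
  · exact e.isMax_apply.2 isMax_top

theorem card_isMaxChainList_length_eq [Fintype {l : List P // IsMaxChainList l}] (m : ℕ) :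
    Nat.card {l : List P // IsMaxChainList l ∧ l.length = m} =
      (Finset.univ.filter fun l : {l : List P // IsMaxChainList l} => l.1.length = m).card := by
  rw [← Fintype.card_subtype, ← Nat.card_eq_fintype_card]
  exact Nat.card_congr
    (Equiv.subtypeSubtypeEquivSubtypeInter IsMaxChainList (fun l : List P => l.length = m)).symm

variable [Finite P] [Nonempty P]

theorem surjective_toFlag :
    Function.Surjective fun l : {l : List P // IsMaxChainList l} => l.2.toFlag := by
  classical
  intro C
  have := Fintype.ofFinite C
  have : Nonempty C := C.maxChain.nonempty_iff.1 ‹_› |>.to_subtype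
  obtain ⟨n, hn⟩ := Nat.exists_eq_succ_of_ne_zero (Fintype.card_ne_zero (α := C))
  let e : Fin (n + 1) ≃o C := Fintype.orderIsoFinOfCardEq C hn
  refine ⟨⟨_, isMaxChainList_ofFn e⟩, Flag.ext ?_⟩
  ext a
  calc a ∈ List.ofFn (fun k => (e k : P)) ↔ ∃ k, (e k : P) = a := List.mem_ofFn
    _ ↔ ∃ c : C, (c : P) = a :=
        (e.surjective.exists (p := fun c => (c : P) = a)).symm
    _ ↔ a ∈ C := by simp

/-- Maximal chains as lists are the same thing as flags. -/
noncomputable def maxChainListEquivFlag : {l : List P // IsMaxChainList l} ≃ Flag P :=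
  Equiv.ofBijective _ ⟨injective_toFlag, surjective_toFlag⟩

theorem ncard_maxChainListEquivFlag (l : {l : List P // IsMaxChainList l}) :
    (maxChainListEquivFlag l : Set P).ncard = l.1.length := by
  classical
  have hcoe : (maxChainListEquivFlag l : Set P) = (l.1.toFinset : Set P) := l.1.coe_toFinset.symm
  rw [hcoe, ncard_coe_finset, List.toFinset_card_of_nodup l.2.sortedLT.nodup]

end MaximalChains

theorem finsum_flag_eq_sum_isMaxChainList {P : Type*} [Fintype P] [PartialOrder P] [Nonempty P]
    (f : ℕ → ℕ) : ∑ᶠ C : Flag P, f (C : Set P).ncard =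
      ∑ ℓ ∈ Finset.range (Fintype.card P),
        f (ℓ + 1) * Nat.card {l : List P // IsMaxChainList l ∧ l.length = ℓ + 1} := by
  have : Finite {l : List P // IsMaxChainList l} := .of_equiv _ maxChainListEquivFlag.symm
  have := Fintype.ofFinite {l : List P // IsMaxChainList l}
  have hmaps : ∀ l ∈ (Finset.univ : Finset {l : List P // IsMaxChainList l}),
      l.1.length - 1 ∈ Finset.range (Fintype.card P) := fun l _ => by
    have := l.2.length_pos
    have := l.2.sortedLT.nodup.length_le_card
    exact Finset.mem_range.2 (by omega)
  have hfiber (l : {l : List P // IsMaxChainList l}) (ℓ : ℕ) :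
      l.1.length - 1 = ℓ ↔ l.1.length = ℓ + 1 := by
    have := l.2.length_pos
    omega
  calc ∑ᶠ C : Flag P, f (C : Set P).ncard
      = ∑ᶠ l : {l : List P // IsMaxChainList l}, f l.1.length := by
        simp only [← finsum_comp_equiv maxChainListEquivFlag, ncard_maxChainListEquivFlag]
    _ = ∑ ℓ ∈ Finset.range (Fintype.card P),
          ∑ l : {l : List P // IsMaxChainList l} with l.1.length = ℓ + 1, f l.1.length := by
        rw [finsum_eq_sum_of_fintype, ← Finset.sum_fiberwise_of_maps_to hmaps]
        simp only [hfiber]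
    _ = _ := Finset.sum_congr rfl fun ℓ _ => by
        rw [card_isMaxChainList_length_eq, mul_comm, ← smul_eq_mul]
        exact Finset.sum_eq_card_nsmul fun l hl => by rw [(Finset.mem_filter.1 hl).2]

/-! ### The enriched chain polytope -/

section ChainWeight

variable {P : Type*} [PartialOrder P] {w : P → ℝ} {i j : P} {c : ℝ}

/-- The largest weight of a chain all of whose members are at most `i`. For `w` in the chain
polytope this is the value at `i` of the inverse of Stanley's transfer map. -/
noncomputable def chainWeight (w : P → ℝ) (i : P) : ℝ :=
  ⨆ s : {s : Finset P // IsChain (· ≤ ·) (s : Set P) ∧ ∀ k ∈ s, k ≤ i}, ∑ k ∈ s.1, w k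

theorem chainWeight_le
    (h : ∀ s : Finset P, IsChain (· ≤ ·) (s : Set P) → (∀ k ∈ s, k ≤ i) → ∑ k ∈ s, w k ≤ c) :
    chainWeight w i ≤ c :=
  have : Nonempty {s : Finset P // IsChain (· ≤ ·) (s : Set P) ∧ ∀ k ∈ s, k ≤ i} :=
    ⟨∅, by simp⟩
  ciSup_le fun s => h s.1 s.2.1 s.2.2

variable [Finite P]

theorem sum_le_chainWeight {s : Finset P} (hs : IsChain (· ≤ ·) (s : Set P))
    (hsi : ∀ k ∈ s, k ≤ i) : ∑ k ∈ s, w k ≤ chainWeight w i := by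
  have := Fintype.ofFinite P
  exact le_ciSup (f := fun s : {s : Finset P // IsChain (· ≤ ·) (s : Set P) ∧ ∀ k ∈ s, k ≤ i} =>
    ∑ k ∈ s.1, w k) (finite_range _).bddAbove ⟨s, hs, hsi⟩

theorem le_chainWeight (w : P → ℝ) (i : P) : w i ≤ chainWeight w i := by
  have h := sum_le_chainWeight (w := w) (s := {i}) (i := i) (by simp) (by simp)
  rwa [Finset.sum_singleton] at h

theorem chainWeight_add_le_chainWeight (hij : i < j) :
    chainWeight w i + w j ≤ chainWeight w j := by
  classical
  rw [← le_sub_iff_add_le]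
  refine chainWeight_le fun s hs hsi => le_sub_iff_add_le.2 ?_
  have hsj (k : P) (hk : k ∈ s) : k < j := (hsi k hk).trans_lt hij
  have hj : j ∉ s := fun hj => (hsj j hj).false
  have hchain : IsChain (· ≤ ·) (↑(insert j s) : Set P) := by
    rw [Finset.coe_insert]
    exact hs.insert fun k hk _ => Or.inr (hsj k hk).le
  calc ∑ k ∈ s, w k + w j = ∑ k ∈ insert j s, w k := by rw [Finset.sum_insert hj, add_comm]
    _ ≤ chainWeight w j :=
      sum_le_chainWeight hchain <|
        Finset.forall_mem_insert .. |>.2 ⟨le_rfl, fun k hk => (hsj k hk).le⟩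

end ChainWeight

section EnrichedChainPolytope

variable {P : Type*} [PartialOrder P] {y : P → ℝ}

theorem finite_enrichedChainVerts [Finite P] : (enrichedChainVerts P).Finite := by
  refine (finite_iUnion finite_signedIndicators).subset ?_
  rintro x ⟨A, -, hx⟩
  exact mem_iUnion.2 ⟨A, hx⟩

/-- The signed indicator vector, with the signs of `y`, of the level set at height `t` of the
transfer map: the set of those `i` for which `t` lies in the interval of length `|y i|` ending at
`chainWeight |y| i`. -/
noncomputable def levelVert (y : P → ℝ) (t : ℝ) : P → ℝ :=
  {i | t ∈ Ioc (chainWeight |y| i - |y i|) (chainWeight |y| i)}.indicator fun i => unitSign (y i)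

theorem levelVert_mem_enrichedChainVerts [Finite P] (y : P → ℝ) (t : ℝ) :
    levelVert y t ∈ enrichedChainVerts P := by
  refine ⟨_, fun i hi j hj hij hle => ?_, indicator_unitSign_mem_signedIndicators _ y⟩
  have hle' := chainWeight_add_le_chainWeight (w := |y|) (hle.lt_of_ne hij)
  rw [Pi.abs_apply, ← le_sub_iff_add_le] at hle'
  exact (hi.2.trans hle').not_gt hj.1

theorem levelVert_apply (y : P → ℝ) (i : P) : (fun t => levelVert y t i) =
    (Ioc (chainWeight |y| i - |y i|) (chainWeight |y| i)).indicator fun _ => unitSign (y i) :=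
  rfl

theorem integrableOn_levelVert [Fintype P] (y : P → ℝ) : IntegrableOn (levelVert y) (Ioc 0 1) := by
  refine Integrable.of_eval fun i => ?_
  rw [levelVert_apply]
  exact (integrable_const _).indicator measurableSet_Ioc

theorem setIntegral_levelVert [Fintype P]
    (hy : ∀ s : Finset P, IsChain (· ≤ ·) (s : Set P) → ∑ i ∈ s, |y i| ≤ 1) :
    ∫ t in Ioc 0 1, levelVert y t = y := by
  ext i
  have hsub : Ioc (chainWeight |y| i - |y i|) (chainWeight |y| i) ⊆ Ioc 0 1 :=
    Ioc_subset_Ioc (sub_nonneg.2 (le_chainWeight |y| i)) (chainWeight_le fun s hs _ => hy s hs)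
  rw [eval_integral fun j => (integrableOn_levelVert y).eval j, levelVert_apply,
    setIntegral_indicator measurableSet_Ioc, inter_eq_self_of_subset_right hsub,
    setIntegral_const, Real.volume_real_Ioc_of_le (by simp), sub_sub_cancel, smul_eq_mul, mul_comm,
    unitSign_mul_abs]

theorem mem_convexHull_enrichedChainVerts [Finite P]
    (hy : ∀ s : Finset P, IsChain (· ≤ ·) (s : Set P) → ∑ i ∈ s, |y i| ≤ 1) :
    y ∈ convexHull ℝ (enrichedChainVerts P) := by
  have := Fintype.ofFinite P
  have : IsProbabilityMeasure (volume.restrict (Ioc (0 : ℝ) 1)) := ⟨by simp⟩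
  rw [← setIntegral_levelVert hy]
  exact (convex_convexHull ℝ _).integral_mem (finite_enrichedChainVerts.isClosed_convexHull ℝ)
    (.of_forall fun t => subset_convexHull ℝ _ (levelVert_mem_enrichedChainVerts y t))
    (integrableOn_levelVert y)

end EnrichedChainPolytope

section ChainFunctionals

variable {P : Type*} [Fintype P]

open Classical in
/-- The identification of `ℝ^P` with its dual under which `x` becomes the functional `x ⬝ᵥ ·`. -/
noncomputable def dotProductDualEquiv : (P → ℝ) ≃ₗ[ℝ] StrongDual ℝ (P → ℝ) :=
  dotProductEquiv ℝ P ≪≫ₗ LinearMap.toContinuousLinearMap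

theorem dotProductDualEquiv_apply (x y : P → ℝ) : dotProductDualEquiv x y = x ⬝ᵥ y := rfl

variable [PartialOrder P] {C : Flag P} {x : P → ℝ} {i j : P}

variable (P) in
/-- The functionals `∑_{i ∈ C} ε_i x_i` attached to the maximal chains `C` and the sign vectors
`ε ∈ {−1,1}^C`. -/
noncomputable def chainFunctionals : Set (StrongDual ℝ (P → ℝ)) :=
  dotProductDualEquiv '' ⋃ C : Flag P, signedIndicators C

theorem forall_mem_chainFunctionals {p : StrongDual ℝ (P → ℝ) → Prop} :
    (∀ g ∈ chainFunctionals P, p g) ↔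
      ∀ (C : Flag P), ∀ x ∈ signedIndicators (C : Set P), p (dotProductDualEquiv x) := by
  simp only [chainFunctionals, forall_mem_image, mem_iUnion, forall_exists_index]
  exact forall_comm

theorem finite_chainFunctionals : (chainFunctionals P).Finite :=
  (finite_iUnion fun C : Flag P => finite_signedIndicators (C : Set P)).image _

theorem ncard_chainFunctionals :
    (chainFunctionals P).ncard = ∑ᶠ C : Flag P, 2 ^ (C : Set P).ncard := by
  rw [chainFunctionals, ncard_image_of_injective _ dotProductDualEquiv.injective,
    ncard_iUnion_of_finite (fun C => finite_signedIndicators _)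
      (pairwise_disjoint_signedIndicators.comp_of_injective SetLike.coe_injective)]
  simp only [ncard_signedIndicators]

theorem enrichedChainVerts_subset_oneSidedPolar :
    enrichedChainVerts P ⊆ oneSidedPolar (chainFunctionals P) := by
  rintro y ⟨A, hA, hy⟩
  refine forall_mem_chainFunctionals.2 fun C x hx => ?_
  rw [dotProductDualEquiv_apply]
  exact dotProduct_le_one_of_subsingleton_inter
    (inter_subsingleton_of_isChain_of_isAntichain C.chain_le hA) hx hy

theorem sum_abs_le_one_of_mem_oneSidedPolar {y : P → ℝ}
    (hy : y ∈ oneSidedPolar (chainFunctionals P)) {s : Finset P}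
    (hs : IsChain (· ≤ ·) (s : Set P)) : ∑ i ∈ s, |y i| ≤ 1 := by
  obtain ⟨C, hsC⟩ := hs.exists_subset_flag
  have hle := forall_mem_chainFunctionals.1 hy C _ (indicator_unitSign_mem_signedIndicators C y)
  have hterm (i : P) : (C : Set P).indicator (fun i => unitSign (y i)) i * y i =
      (C : Set P).indicator (fun i => |y i|) i := by
    simp only [← indicator_mul_left, unitSign_mul_self]
  calc ∑ i ∈ s, |y i| = ∑ i ∈ s, (C : Set P).indicator (fun i => |y i|) i :=
        Finset.sum_congr rfl fun i hi => (indicator_of_mem (hsC hi) fun i => |y i|).symm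
    _ ≤ ∑ i, (C : Set P).indicator (fun i => |y i|) i :=
        Finset.sum_le_univ_sum_of_nonneg fun i => indicator_nonneg (fun i _ => abs_nonneg (y i)) i
    _ = (C : Set P).indicator (fun i => unitSign (y i)) ⬝ᵥ y :=
        Finset.sum_congr rfl fun i _ => (hterm i).symm
    _ ≤ 1 := dotProductDualEquiv_apply _ y ▸ hle

theorem convexHull_enrichedChainVerts :
    convexHull ℝ (enrichedChainVerts P) = oneSidedPolar (chainFunctionals P) :=
  (convexHull_min enrichedChainVerts_subset_oneSidedPolar convex_oneSidedPolar).antisymm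
    fun _ hy => mem_convexHull_enrichedChainVerts fun _ => sum_abs_le_one_of_mem_oneSidedPolar hy

theorem mem_polarFace_chainFunctionals {y : P → ℝ} (hy : y ∈ enrichedChainVerts P)
    (hxy : x ⬝ᵥ y = 1) : y ∈ polarFace (chainFunctionals P) (dotProductDualEquiv x) :=
  ⟨enrichedChainVerts_subset_oneSidedPolar hy, (dotProductDualEquiv_apply x y).trans hxy⟩

theorem single_mem_polarFace [DecidableEq P] (hx : x ∈ signedIndicators (C : Set P)) (hi : i ∈ C) :
    Pi.single i (x i) ∈ polarFace (chainFunctionals P) (dotProductDualEquiv x) := by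
  refine mem_polarFace_chainFunctionals
    ⟨{i}, IsAntichain.singleton, single_mem_signedIndicators (hx.1 i hi)⟩ ?_
  rw [dotProduct_single, mul_self_of_mem_signedIndicators hx hi]

theorem single_add_single_mem_polarFace [DecidableEq P]
    (hx : x ∈ signedIndicators (C : Set P)) (hi : i ∈ C) (hj : j ∉ C) (hij : ¬i ≤ j)
    (hji : ¬j ≤ i) :
    Pi.single i (x i) + Pi.single j 1 ∈
      polarFace (chainFunctionals P) (dotProductDualEquiv x) := by
  have hne : i ≠ j := fun h => hij h.le
  refine mem_polarFace_chainFunctionals ⟨{i} ∪ {j}, ?_, add_mem_signedIndicators_union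
    (disjoint_singleton.2 hne) (single_mem_signedIndicators (hx.1 i hi))
    (single_mem_signedIndicators (.inl rfl))⟩ ?_
  · exact pairwise_pair.2 fun _ => ⟨hij, hji⟩
  · rw [dotProduct_add, dotProduct_single, dotProduct_single, hx.2 j hj,
      mul_self_of_mem_signedIndicators hx hi, zero_mul, add_zero]

theorem span_polarFace_chainFunctionals (hx : x ∈ signedIndicators (C : Set P)) :
    Submodule.span ℝ (polarFace (chainFunctionals P) (dotProductDualEquiv x)) = ⊤ := by
  classical
  set U := Submodule.span ℝ (polarFace (chainFunctionals P) (dotProductDualEquiv x))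
  rw [eq_top_iff, ← (Pi.basisFun ℝ P).span_eq, Submodule.span_le, range_subset_iff]
  intro j
  rw [Pi.basisFun_apply]
  by_cases hj : j ∈ C
  · have hsmul : x j • Pi.single j (x j) = (Pi.single j 1 : P → ℝ) := by
      rw [← Pi.single_smul, smul_eq_mul, mul_self_of_mem_signedIndicators hx hj]
    rw [← hsmul]
    exact U.smul_mem _ (Submodule.subset_span (single_mem_polarFace hx hj))
  · obtain ⟨i, hi, hji, hij⟩ : ∃ i ∈ C, ¬j ≤ i ∧ ¬i ≤ j := by
      rw [Flag.mem_iff_forall_le_or_ge] at hj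
      push Not at hj
      exact hj
    exact (U.add_mem_iff_right (Submodule.subset_span (single_mem_polarFace hx hi))).1
      (Submodule.subset_span (single_add_single_mem_polarFace hx hi hj hij hji))

end ChainFunctionals

/-- The number of facets of `C^(e)_P` is `Σ_{ℓ=0}^{n-1} 2^{ℓ+1} mc_ℓ(P)`, where
`mc_ℓ(P)` is the number of maximal chains of length `ℓ` (with `ℓ+1` elements). -/
theorem stmt13 (P : Type*) [Fintype P] [PartialOrder P] [Nonempty P] :
    Set.ncard {F : Set (P → ℝ) | IsFacetOf P (convexHull ℝ (enrichedChainVerts P)) F}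
      = ∑ ℓ ∈ Finset.range (Fintype.card P),
          2 ^ (ℓ + 1) * Nat.card {l : List P // IsMaxChainList l ∧ l.length = ℓ + 1} := by
  have hspan : ∀ g ∈ chainFunctionals P,
      Submodule.span ℝ (polarFace (chainFunctionals P) g) = ⊤ :=
    forall_mem_chainFunctionals.2 fun _ _ => span_polarFace_chainFunctionals
  rw [convexHull_enrichedChainVerts,
    ncard_setOf_isFacetOf_oneSidedPolar finite_chainFunctionals hspan, ncard_chainFunctionals]
  exact finsum_flag_eq_sum_isMaxChainList (2 ^ ·)
end

section
/- Let P be a finite poset on {1,...,n}. The number of facets of the enriched chain polytope C^(e)_P is at most 2^n, with equality if P is a chain. -/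
/-!
`C^(e)_P` is the polytope of the inequalities `d ⬝ᵥ x ≤ 1`, where `d` runs over the `±1` vectors
supported on maximal chains, equivalently of `∑ i ∈ C, |x i| ≤ 1` for all chains `C`. Indeed, given
such an `x`, the maximal elements of its support form an antichain; subtracting from `x` the signed
indicator of this antichain, scaled by the least `|x i|` on it, shrinks the support and lowers all
chain sums to at most one minus the scale, so `x` decomposes into a subconvex combination of
vertices. Each inequality defines a facet, because the vertices on which it is tight span the whole
space, and the facets are therefore counted by `∑ C, 2 ^ |C|` over the maximal chains `C`.

For the bound `∑ C, 2 ^ |C| ≤ 2 ^ n`, let `T` be the set of maximal elements of `P`. Every maximal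
chain contains some `m ∈ T`, and without `m` it is a maximal chain of the elements below `m`, which
avoid `T`. By induction the sum is at most `2 * |T| * 2 ^ (n - |T|)`, and `2 * |T| ≤ 2 ^ |T|`.
-/

section Chains

variable {P : Type*} [PartialOrder P]

open Classical in
/-- The maximal chains of the subposet `s`. The subposet varies so that one can recurse on the
elements below a maximal one. -/
noncomputable def maxChains (s : Finset P) : Finset (Finset P) :=
  {C ∈ s.powerset | Maximal (fun D : Finset P ↦ D ⊆ s ∧ IsChain (· ≤ ·) (D : Set P)) C}

lemma mem_maxChains {s C : Finset P} :
    C ∈ maxChains s ↔ Maximal (fun D : Finset P ↦ D ⊆ s ∧ IsChain (· ≤ ·) (D : Set P)) C := by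
  simpa [maxChains] using fun h : Maximal _ C ↦ h.prop.1

lemma isChain_of_mem_maxChains {s C : Finset P} (hC : C ∈ maxChains s) :
    IsChain (· ≤ ·) (C : Set P) :=
  (mem_maxChains.1 hC).prop.2

lemma mem_of_mem_maxChains {s C : Finset P} (hC : C ∈ maxChains s) {x : P} (hx : x ∈ s)
    (hcomp : ∀ y ∈ C, x ≤ y ∨ y ≤ x) : x ∈ C := by
  classical
  rw [mem_maxChains] at hC
  refine hC.le_of_ge ⟨Finset.insert_subset hx hC.prop.1, ?_⟩ (Finset.subset_insert x C)
    (Finset.mem_insert_self x C)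
  rw [Finset.coe_insert]
  exact hC.prop.2.insert fun y hy _ ↦ hcomp y hy

lemma exists_mem_maxChains_superset {s C : Finset P} (hCs : C ⊆ s)
    (hC : IsChain (· ≤ ·) (C : Set P)) : ∃ D ∈ maxChains s, C ⊆ D := by
  have hfin : {D : Finset P | D ⊆ s ∧ IsChain (· ≤ ·) (D : Set P)}.Finite :=
    s.powerset.finite_toSet.subset fun D hD ↦ Finset.mem_powerset.2 hD.1
  obtain ⟨D, hCD, hD⟩ := hfin.exists_le_maximal ⟨hCs, hC⟩
  exact ⟨D, mem_maxChains.2 hD, hCD⟩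

lemma maxChains_eq_singleton {s : Finset P} (hs : IsChain (· ≤ ·) (s : Set P)) :
    maxChains s = {s} := by
  ext C
  rw [mem_maxChains, Finset.mem_singleton]
  constructor
  · exact fun hC ↦ hC.eq_of_le ⟨subset_rfl, hs⟩ hC.prop.1
  · rintro rfl
    exact ⟨⟨subset_rfl, hs⟩, fun D hD _ ↦ hD.1⟩

lemma exists_maximal_forall_le {s C : Finset P} (hs : s.Nonempty) (hCs : C ⊆ s)
    (hC : IsChain (· ≤ ·) (C : Set P)) : ∃ m, Maximal (· ∈ s) m ∧ ∀ x ∈ C, x ≤ m := by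
  rcases C.eq_empty_or_nonempty with rfl | hne
  · obtain ⟨m, hm⟩ := s.exists_maximal hs
    exact ⟨m, hm, by simp⟩
  · obtain ⟨c, hc⟩ := C.exists_maximal hne
    obtain ⟨m, hcm, hm⟩ := s.exists_le_maximal (hCs hc.prop)
    refine ⟨m, hm, fun x hx ↦ le_trans ?_ hcm⟩
    exact (hC.total hx hc.prop).elim id fun hcx ↦ hc.le_of_ge hx hcx

lemma exists_maximal_mem_of_mem_maxChains {s C : Finset P} (hs : s.Nonempty)
    (hC : C ∈ maxChains s) : ∃ m ∈ C, Maximal (· ∈ s) m := by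
  obtain ⟨m, hm, hCm⟩ := exists_maximal_forall_le hs (mem_maxChains.1 hC).prop.1
    (isChain_of_mem_maxChains hC)
  exact ⟨m, mem_of_mem_maxChains hC hm.prop fun y hy ↦ .inr (hCm y hy), hm⟩

open Classical in
lemma erase_mem_maxChains {s C : Finset P} (hC : C ∈ maxChains s) {m : P}
    (hm : Maximal (· ∈ s) m) (hmC : m ∈ C) : C.erase m ∈ maxChains {x ∈ s | x < m} := by
  rw [mem_maxChains] at hC ⊢
  refine ⟨⟨fun x hx ↦ ?_, hC.prop.2.mono (by simp)⟩, fun D hD hCD x hx ↦ ?_⟩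
  · obtain ⟨hxm, hxC⟩ := Finset.mem_erase.1 hx
    have hxs := hC.prop.1 hxC
    refine Finset.mem_filter.2 ⟨hxs, lt_of_le_of_ne ?_ hxm⟩
    exact (hC.prop.2.total hxC hmC).elim id fun hmx ↦ hm.le_of_ge hxs hmx
  · have hDs (y : P) (hy : y ∈ D) : y ∈ s ∧ y < m := by simpa using hD.1 hy
    have hins : insert m D ⊆ C := by
      refine hC.le_of_ge ⟨Finset.insert_subset hm.prop fun y hy ↦ (hDs y hy).1, ?_⟩ ?_
      · rw [Finset.coe_insert]
        exact hD.2.insert fun y hy _ ↦ .inr (hDs y hy).2.le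
      · exact Finset.subset_insert_iff.2 hCD
    exact Finset.mem_erase.2 ⟨(hDs x hx).2.ne, hins (Finset.mem_insert_of_mem hx)⟩

open Classical in
lemma sum_two_pow_card_maxChains_mem_le {s : Finset P} {m : P} (hm : Maximal (· ∈ s) m) :
    ∑ C ∈ maxChains s with m ∈ C, 2 ^ C.card ≤
      2 * ∑ C ∈ maxChains {x ∈ s | x < m}, 2 ^ C.card := by
  have herase (C : Finset P) (hC : m ∈ C) : 2 ^ C.card = 2 * 2 ^ (C.erase m).card := by
    rw [← pow_succ', Finset.card_erase_add_one hC]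
  have hinj : Set.InjOn (fun C : Finset P ↦ C.erase m) {C ∈ maxChains s | m ∈ C} :=
    (Finset.erase_injOn' m).mono fun C hC ↦ hC.2
  calc
    _ = 2 * ∑ C ∈ maxChains s with m ∈ C, 2 ^ (C.erase m).card := by
      rw [Finset.mul_sum]
      exact Finset.sum_congr rfl fun C hC ↦ herase C (Finset.mem_filter.1 hC).2
    _ = 2 * ∑ C ∈ {C ∈ maxChains s | m ∈ C}.image fun C ↦ C.erase m, 2 ^ C.card := by
      rw [Finset.sum_image (by simpa using hinj)]
    _ ≤ _ := by
      gcongr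
      intro D hD
      obtain ⟨C, hC, rfl⟩ := Finset.mem_image.1 hD
      obtain ⟨hC, hmC⟩ := Finset.mem_filter.1 hC
      exact erase_mem_maxChains hC hm hmC

lemma two_mul_le_two_pow (k : ℕ) : 2 * k ≤ 2 ^ k := by
  rcases k with _ | k
  · simp
  · rw [pow_succ']
    exact Nat.mul_le_mul_left 2 Nat.lt_two_pow_self

open Classical in
theorem sum_two_pow_card_maxChains_le (s : Finset P) :
    ∑ C ∈ maxChains s, 2 ^ C.card ≤ 2 ^ s.card := by
  induction s using Finset.strongInduction with | _ s ih
  rcases s.eq_empty_or_nonempty with rfl | hs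
  · simp [maxChains_eq_singleton]
  set T : Finset P := {m ∈ s | Maximal (· ∈ s) m} with hT
  have hTs : T ⊆ s := Finset.filter_subset _ _
  have hmeet (C : Finset P) (hC : C ∈ maxChains s) :
      2 ^ C.card ≤ ∑ m ∈ T with m ∈ C, 2 ^ C.card := by
    obtain ⟨m, hmC, hm⟩ := exists_maximal_mem_of_mem_maxChains hs hC
    have hmT : m ∈ {m ∈ T | m ∈ C} := by simp [hT, hm, hm.prop, hmC]
    exact Finset.single_le_sum (f := fun _ ↦ 2 ^ C.card) (by simp) hmT
  have hbelow (m : P) (hm : m ∈ T) :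
      ∑ C ∈ maxChains s with m ∈ C, 2 ^ C.card ≤ 2 * 2 ^ (s \ T).card := by
    have hmax : Maximal (· ∈ s) m := (Finset.mem_filter.1 hm).2
    have hsub : {x ∈ s | x < m} ⊆ s \ T := fun x hx ↦ by
      obtain ⟨hxs, hxm⟩ := Finset.mem_filter.1 hx
      exact Finset.mem_sdiff.2 ⟨hxs, fun hxT ↦
        (Finset.mem_filter.1 hxT).2.not_gt hmax.prop hxm⟩
    calc
      _ ≤ 2 * ∑ C ∈ maxChains {x ∈ s | x < m}, 2 ^ C.card :=
        sum_two_pow_card_maxChains_mem_le hmax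
      _ ≤ 2 * 2 ^ (s.filter (· < m)).card := by
        gcongr
        exact ih _ (Finset.filter_ssubset.2 ⟨m, hmax.prop, lt_irrefl m⟩)
      _ ≤ _ := by gcongr; norm_num
  calc
    _ ≤ ∑ C ∈ maxChains s, ∑ m ∈ T with m ∈ C, 2 ^ C.card := Finset.sum_le_sum hmeet
    _ = ∑ m ∈ T, ∑ C ∈ maxChains s with m ∈ C, 2 ^ C.card :=
      Finset.sum_comm' fun _ _ ↦ by simp only [Finset.mem_filter]; tauto
    _ ≤ ∑ _m ∈ T, 2 * 2 ^ (s \ T).card := Finset.sum_le_sum hbelow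
    _ = 2 * T.card * 2 ^ (s \ T).card := by
      rw [Finset.sum_const, smul_eq_mul, mul_left_comm, mul_assoc]
    _ ≤ 2 ^ T.card * 2 ^ (s \ T).card := by gcongr; exact two_mul_le_two_pow _
    _ = 2 ^ s.card := by
      rw [← pow_add, add_comm, Finset.card_sdiff_add_card_eq_card hTs]

end Chains

section Hyperplanes

variable {k V : Type*} [Field k] [AddCommGroup V] [Module k V] {F : Set V} {f : Module.Dual k V}

lemma vectorSpan_le_ker_s16 {r : k} (hF : ∀ x ∈ F, f x = r) : vectorSpan k F ≤ LinearMap.ker f := by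
  rw [vectorSpan, Submodule.span_le]
  rintro _ ⟨x, hx, y, hy, rfl⟩
  simp [hF x hx, hF y hy]

variable [FiniteDimensional k V]

lemma vectorSpan_eq_ker {r : k} (hF : ∀ x ∈ F, f x = r) (hf : f ≠ 0)
    (hdim : Module.finrank k V ≤ Module.finrank k (vectorSpan k F) + 1) :
    vectorSpan k F = LinearMap.ker f := by
  refine Submodule.eq_of_le_of_finrank_le (vectorSpan_le_ker_s16 hF) ?_
  have := Module.Dual.finrank_ker_add_one_of_ne_zero hf
  lia

lemma finrank_le_finrank_vectorSpan_add_one (hF : Submodule.span k F = ⊤) :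
    Module.finrank k V ≤ Module.finrank k (vectorSpan k F) + 1 := by
  rcases F.eq_empty_or_nonempty with rfl | ⟨x, hx⟩
  · rw [← finrank_top k V, ← hF, Submodule.span_empty, finrank_bot]
    exact Nat.zero_le _
  have hsup : vectorSpan k F ⊔ Submodule.span k {x} = ⊤ := by
    rw [eq_top_iff, ← hF, Submodule.span_le]
    intro y hy
    rw [← sub_add_cancel y x]
    exact Submodule.add_mem_sup (vsub_mem_vectorSpan k hy hx) (Submodule.mem_span_singleton_self x)
  have hadd := Submodule.finrank_add_le_finrank_add_finrank (vectorSpan k F) (Submodule.span k {x})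
  rw [hsup, finrank_top] at hadd
  exact hadd.trans (Nat.add_le_add_left (by simpa using finrank_span_le_card (R := k) {x}) _)

end Hyperplanes

section Facets

open Topology

lemma exists_forall_lt_of_convex {ι E : Type*} [AddCommGroup E] [Module ℝ E] {F : Set E}
    (hF : Convex ℝ F) (hne : F.Nonempty) {f : ι → Module.Dual ℝ E} {b : ι → ℝ} {s : Set ι}
    (hs : s.Finite) (hle : ∀ i ∈ s, ∀ x ∈ F, f i x ≤ b i) (hlt : ∀ i ∈ s, ∃ x ∈ F, f i x < b i) :
    ∃ x ∈ F, ∀ i ∈ s, f i x < b i := by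
  induction s, hs using Set.Finite.induction_on with
  | empty => exact hne.imp fun x hx ↦ ⟨hx, by simp⟩
  | @insert i s _ _ ih =>
    obtain ⟨hlei, hle⟩ := Set.forall_mem_insert.1 hle
    obtain ⟨⟨y, hyF, hy⟩, hlt⟩ := Set.forall_mem_insert.1 hlt
    obtain ⟨x, hxF, hx⟩ := ih hle hlt
    refine ⟨midpoint ℝ x y, hF.midpoint_mem hxF hyF, Set.forall_mem_insert.2 ⟨?_, fun j hj ↦ ?_⟩⟩
    all_goals rw [midpoint_eq_smul_add, map_smul, map_add, smul_eq_mul, invOf_eq_inv]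
    · linarith [hlei x hxF]
    · linarith [hx j hj, hle j hj y hyF]

variable {P : Type*} [Fintype P] {S F : Set (P → ℝ)} {D : Set (P → ℝ)} {d : P → ℝ}

/-- The face of `S` cut out by the inequality `d ⬝ᵥ x ≤ 1`. -/
def faceAt (S : Set (P → ℝ)) (d : P → ℝ) : Set (P → ℝ) :=
  {x ∈ S | d ⬝ᵥ x = 1}

/-- The polyhedron of the inequalities `d ⬝ᵥ x ≤ 1` for `d ∈ D`, which is the one-sided polar
of `D`; `LinearMap.polar` bounds the norm of the pairing instead. -/
def polarSet (D : Set (P → ℝ)) : Set (P → ℝ) :=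
  {x | ∀ d ∈ D, d ⬝ᵥ x ≤ 1}

lemma zero_mem_polarSet : (0 : P → ℝ) ∈ polarSet D := fun d _ ↦ by simp

lemma convex_polarSet : Convex ℝ (polarSet D) := by
  have hD : polarSet D = ⋂ d ∈ D, {x | dotProductBilin ℝ ℝ d x ≤ 1} := by
    ext x
    simp [polarSet]
  rw [hD]
  exact convex_iInter₂ fun d _ ↦ convex_halfSpace_le (dotProductBilin ℝ ℝ d).isLinear 1

lemma polarSet_mem_nhds (hD : D.Finite) {x : P → ℝ} (hx : ∀ d ∈ D, d ⬝ᵥ x < 1) :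
    polarSet D ∈ 𝓝 x := by
  refine (Filter.eventually_all_finite hD).2 fun d hd ↦ ?_
  have hcont : Continuous fun y : P → ℝ ↦ d ⬝ᵥ y := by fun_prop
  exact (hcont.continuousAt.eventually_lt continuousAt_const (hx d hd)).mono fun _ ↦ le_of_lt

lemma exists_subset_faceAt_of_isExposed (hD : D.Finite) (hF : IsExposed ℝ (polarSet D) F)
    (hne : F.Nonempty) (hproper : F ≠ polarSet D) : ∃ d ∈ D, F ⊆ faceAt (polarSet D) d := by
  by_contra! hcon
  have hlt : ∀ d ∈ D, ∃ x ∈ F, dotProductBilin ℝ ℝ d x < 1 := fun d hd ↦ by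
    obtain ⟨x, hxF, hx⟩ := Set.not_subset.1 (hcon d hd)
    exact ⟨x, hxF, (hF.subset hxF d hd).lt_of_ne fun h ↦ hx ⟨hF.subset hxF, h⟩⟩
  obtain ⟨x, hxF, hx⟩ := exists_forall_lt_of_convex (hF.convex convex_polarSet) hne hD
    (fun d hd x hxF ↦ hF.subset hxF d hd) hlt
  obtain ⟨l, rfl⟩ := hF hne
  have hmax : IsLocalMax l x := Filter.mem_of_superset (polarSet_mem_nhds hD hx) hxF.2
  have hl : l = 0 := hmax.hasFDerivAt_eq_zero l.hasFDerivAt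
  exact hproper (by simp [hl])

lemma IsFacetOf.eq_faceAt_of_subset (hF : IsFacetOf P S F) (hFd : F ⊆ faceAt S d) :
    F = faceAt S d := by
  obtain ⟨⟨x₀, hx₀⟩, hexp, hproper, hdim⟩ := hF
  have hrank : Module.finrank ℝ (P → ℝ) ≤ Module.finrank ℝ (vectorSpan ℝ F) + 1 := by
    rw [hdim, Module.finrank_fintype_fun_eq_card]
    lia
  obtain ⟨l, hl⟩ := hexp ⟨x₀, hx₀⟩
  have hFl : ∀ x ∈ F, l x = l x₀ := fun x hx ↦ by
    rw [hl] at hx hx₀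
    exact le_antisymm (hx₀.2 x hx.1) (hx.2 x₀ hx₀.1)
  have hl₀ : (l : Module.Dual ℝ (P → ℝ)) ≠ 0 := fun h ↦ hproper <| by
    have : l = 0 := by exact_mod_cast h
    simpa [this] using hl
  have hd₀ : dotProductBilin ℝ ℝ d ≠ 0 := fun h ↦ by
    simpa [h] using (hFd hx₀).2.symm.trans (DFunLike.congr_fun h x₀)
  have hker : LinearMap.ker (dotProductBilin ℝ ℝ d) = LinearMap.ker (l : Module.Dual ℝ (P → ℝ)) :=
    (vectorSpan_eq_ker (fun x hx ↦ (hFd hx).2) hd₀ hrank).symm.trans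
      (vectorSpan_eq_ker hFl hl₀ hrank)
  refine hFd.antisymm fun x hx ↦ ?_
  have hxl : l x = l x₀ := by
    have hx_sub : x - x₀ ∈ LinearMap.ker (dotProductBilin ℝ ℝ d) := by
      rw [LinearMap.sub_mem_ker_iff]
      exact hx.2.trans (hFd hx₀).2.symm
    rw [hker] at hx_sub
    exact LinearMap.sub_mem_ker_iff.1 hx_sub
  rw [hl] at hx₀ ⊢
  exact ⟨hx.1, fun y hy ↦ hxl ▸ hx₀.2 y hy⟩

lemma isFacetOf_faceAt [Nonempty P] (h₀ : 0 ∈ S) (hle : ∀ x ∈ S, d ⬝ᵥ x ≤ 1)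
    (hspan : Submodule.span ℝ (faceAt S d) = ⊤) : IsFacetOf P S (faceAt S d) := by
  have hne : (faceAt S d).Nonempty := by
    rw [Set.nonempty_iff_ne_empty]
    intro h
    simp [h, bot_ne_top] at hspan
  have ⟨x₀, hx₀⟩ := hne
  have hd₀ : dotProductBilin ℝ ℝ d ≠ 0 := fun h ↦ by
    simpa [h] using hx₀.2.symm.trans (DFunLike.congr_fun h x₀)
  refine ⟨hne, fun _ ↦ ⟨LinearMap.toContinuousLinearMap (dotProductBilin ℝ ℝ d), ?_⟩, ?_, ?_⟩
  · ext x
    refine and_congr_right fun hx ↦ ⟨fun hdx y hy ↦ (hle y hy).trans_eq hdx.symm, fun hmax ↦ ?_⟩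
    exact le_antisymm (hle x hx) (hx₀.2.symm.trans_le (hmax x₀ hx₀.1))
  · intro h
    rw [← h] at h₀
    simpa using h₀.2
  · have hker := vectorSpan_eq_ker (f := dotProductBilin ℝ ℝ d) (fun x hx ↦ hx.2) hd₀
      (finrank_le_finrank_vectorSpan_add_one hspan)
    have := Module.Dual.finrank_ker_add_one_of_ne_zero hd₀
    rw [Module.finrank_fintype_fun_eq_card] at this
    rw [hker]
    lia

lemma eq_of_faceAt_eq {d' : P → ℝ} (hspan : Submodule.span ℝ (faceAt S d) = ⊤)
    (h : faceAt S d = faceAt S d') : d = d' := by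
  have heq : dotProductBilin ℝ ℝ d = dotProductBilin ℝ ℝ d' :=
    LinearMap.ext_on hspan fun x hx ↦ hx.2.trans (h ▸ hx).2.symm
  exact dotProduct_eq d d' fun x ↦ DFunLike.congr_fun heq x

theorem ncard_facets_polarSet [Nonempty P] (hD : D.Finite)
    (hspan : ∀ d ∈ D, Submodule.span ℝ (faceAt (polarSet D) d) = ⊤) :
    {F | IsFacetOf P (polarSet D) F}.ncard = D.ncard := by
  have hfacets : {F | IsFacetOf P (polarSet D) F} = faceAt (polarSet D) '' D := by
    ext F
    constructor
    · intro hF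
      obtain ⟨d, hd, hFd⟩ := exists_subset_faceAt_of_isExposed hD hF.2.1 hF.1 hF.2.2.1
      exact ⟨d, hd, (hF.eq_faceAt_of_subset hFd).symm⟩
    · rintro ⟨d, hd, rfl⟩
      exact isFacetOf_faceAt zero_mem_polarSet (fun x hx ↦ hx d hd) (hspan d hd)
  rw [hfacets]
  exact Set.InjOn.ncard_image fun d hd _ _ ↦ eq_of_faceAt_eq (hspan d hd)

end Facets

section SignVectors

variable {P : Type*} [Fintype P] {A C : Finset P} {x : P → ℝ}

open Classical in
/-- The `±1` vectors supported on `A`: vertices of `C^(e)_P` when `A` is an antichain, facet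
normals when `A` is a maximal chain. -/
noncomputable def signVectors (A : Finset P) : Finset (P → ℝ) :=
  Fintype.piFinset fun i ↦ if i ∈ A then {1, -1} else {0}

lemma mem_signVectors :
    x ∈ signVectors A ↔ (∀ i ∈ A, x i = 1 ∨ x i = -1) ∧ ∀ i ∉ A, x i = 0 := by
  classical
  rw [signVectors, Fintype.mem_piFinset, ← forall_and]
  refine forall_congr' fun i ↦ ?_
  by_cases hi : i ∈ A <;> simp [hi]

lemma abs_of_mem_signVectors {i : P} (hx : x ∈ signVectors A) (hi : i ∈ A) : |x i| = 1 := by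
  rcases (mem_signVectors.1 hx).1 i hi with h | h <;> simp [h]

lemma mem_iff_of_mem_signVectors {i : P} (hx : x ∈ signVectors A) : i ∈ A ↔ x i ≠ 0 :=
  ⟨fun hi ↦ by simp [← abs_pos, abs_of_mem_signVectors hx hi],
    not_imp_comm.1 ((mem_signVectors.1 hx).2 i)⟩

lemma card_signVectors (A : Finset P) : (signVectors A).card = 2 ^ A.card := by
  classical
  have hpair : ({1, -1} : Finset ℝ).card = 2 := Finset.card_pair (by norm_num)
  simp [signVectors, Fintype.card_piFinset, apply_ite Finset.card, hpair]

lemma pairwiseDisjoint_signVectors (s : Set (Finset P)) : s.PairwiseDisjoint signVectors := by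
  refine fun A _ B _ hne ↦ Finset.disjoint_left.2 fun x hA hB ↦ hne ?_
  ext i
  rw [mem_iff_of_mem_signVectors hA, mem_iff_of_mem_signVectors hB]

open Classical in
lemma single_mem_signVectors {i : P} {r : ℝ} (hr : r = 1 ∨ r = -1) :
    Pi.single i r ∈ signVectors {i} := by
  refine mem_signVectors.2 ⟨?_, fun j hj ↦ ?_⟩
  · simpa using hr
  · exact Pi.single_eq_of_ne (mt Finset.mem_singleton.2 hj) _

lemma exists_mem_signVectors_mul_eq_abs (A : Finset P) (x : P → ℝ) :
    ∃ v ∈ signVectors A, ∀ i ∈ A, v i * x i = |x i| := by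
  classical
  refine ⟨fun i ↦ if i ∈ A then if 0 ≤ x i then 1 else -1 else 0, ?_, fun i hi ↦ ?_⟩
  · refine mem_signVectors.2 ⟨fun i hi ↦ ?_, fun i hi ↦ by simp [hi]⟩
    by_cases h : 0 ≤ x i <;> simp [hi, h]
  · by_cases h : 0 ≤ x i
    · simp [hi, h, abs_of_nonneg]
    · simp [hi, h, abs_of_neg (not_le.1 h)]

lemma dotProduct_eq_sum_of_mem_signVectors {d : P → ℝ} (hd : d ∈ signVectors C) :
    d ⬝ᵥ x = ∑ i ∈ C, d i * x i := by
  refine (Finset.sum_subset C.subset_univ fun i _ hi ↦ ?_).symm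
  rw [(mem_signVectors.1 hd).2 i hi, zero_mul]

lemma forall_signVectors_dotProduct_le_iff {r : ℝ} :
    (∀ d ∈ signVectors C, d ⬝ᵥ x ≤ r) ↔ ∑ i ∈ C, |x i| ≤ r := by
  constructor
  · intro h
    obtain ⟨d, hd, hdx⟩ := exists_mem_signVectors_mul_eq_abs C x
    rw [← Finset.sum_congr rfl hdx, ← dotProduct_eq_sum_of_mem_signVectors hd]
    exact h d hd
  · intro h d hd
    rw [dotProduct_eq_sum_of_mem_signVectors hd]
    refine (Finset.sum_le_sum fun i hi ↦ ?_).trans h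
    calc d i * x i ≤ |d i| * |x i| := (le_abs_self _).trans_eq (abs_mul _ _)
      _ = |x i| := by rw [abs_of_mem_signVectors hd hi, one_mul]

open Classical in
lemma sum_abs_of_mem_signVectors (hx : x ∈ signVectors A) (C : Finset P) :
    ∑ i ∈ C, |x i| = (C ∩ A).card := by
  have hterm (i : P) : |x i| = if i ∈ A then 1 else 0 := by
    by_cases hi : i ∈ A
    · simp [hi, abs_of_mem_signVectors hx hi]
    · simp [hi, (mem_signVectors.1 hx).2 i hi]
  simp_rw [hterm, Finset.sum_boole, Finset.filter_mem_eq_inter]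

lemma abs_sub_mul_of_mem_signVectors {v : P → ℝ} (hv : v ∈ signVectors A) {i : P} (hi : i ∈ A)
    (hvx : v i * x i = |x i|) {t : ℝ} (ht : t ≤ |x i|) : |x i - t * v i| = |x i| - t := by
  have hsq : v i * v i = 1 := by rw [← abs_mul_abs_self, abs_of_mem_signVectors hv hi, one_mul]
  have hx : x i - t * v i = v i * (|x i| - t) := by linear_combination x i * (-hsq) + v i * hvx
  rw [hx, abs_mul, abs_of_mem_signVectors hv hi, one_mul, abs_of_nonneg (sub_nonneg.2 ht)]

end SignVectors

section EnrichedChainPolytope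

open scoped Pointwise

variable {P : Type*} [PartialOrder P] {A C : Finset P} {v x : P → ℝ}

lemma zero_mem_enrichedChainVerts : (0 : P → ℝ) ∈ enrichedChainVerts P :=
  ⟨∅, by simp, by simp, by simp⟩

lemma mem_enrichedChainVerts_of_mem_signVectors [Fintype P] (hA : IsAntichain (· ≤ ·) (A : Set P))
    (hv : v ∈ signVectors A) : v ∈ enrichedChainVerts P :=
  ⟨A, hA, mem_signVectors.1 hv⟩

lemma exists_isAntichain_of_mem_enrichedChainVerts [Fintype P] (hv : v ∈ enrichedChainVerts P) :
    ∃ A : Finset P, IsAntichain (· ≤ ·) (A : Set P) ∧ v ∈ signVectors A := by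
  classical
  obtain ⟨A, hA, h⟩ := hv
  exact ⟨A.toFinset, by simpa using hA, mem_signVectors.2 (by simpa using h)⟩

lemma sum_abs_le_one_of_mem_enrichedChainVerts [Finite P] (hC : IsChain (· ≤ ·) (C : Set P))
    (hv : v ∈ enrichedChainVerts P) : ∑ i ∈ C, |v i| ≤ 1 := by
  classical
  cases nonempty_fintype P
  obtain ⟨A, hA, hvA⟩ := exists_isAntichain_of_mem_enrichedChainVerts hv
  rw [sum_abs_of_mem_signVectors hvA]
  have hCA := inter_subsingleton_of_isChain_of_isAntichain hC hA
  exact_mod_cast Finset.card_le_one.2 fun i hi j hj ↦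
    hCA (by simpa using hi) (by simpa using hj)

/-- The signed indicator vectors of the maximal chains of `P`: the outer normals of the facets of
`C^(e)_P`, scaled so that the facet inequalities read `d ⬝ᵥ x ≤ 1`. -/
noncomputable def signedMaxChains (P : Type*) [Fintype P] [PartialOrder P] : Finset (P → ℝ) :=
  (maxChains Finset.univ).disjiUnion signVectors (pairwiseDisjoint_signVectors _)

lemma card_signedMaxChains [Fintype P] :
    (signedMaxChains P).card = ∑ C ∈ maxChains (Finset.univ : Finset P), 2 ^ C.card := by
  simp only [signedMaxChains, Finset.card_disjiUnion, card_signVectors]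

lemma mem_polarSet_signedMaxChains [Fintype P] :
    x ∈ polarSet (signedMaxChains P : Set (P → ℝ)) ↔
      ∀ C : Finset P, IsChain (· ≤ ·) (C : Set P) → ∑ i ∈ C, |x i| ≤ 1 := by
  have hmax : x ∈ polarSet (signedMaxChains P : Set (P → ℝ)) ↔
      ∀ C ∈ maxChains (Finset.univ : Finset P), ∑ i ∈ C, |x i| ≤ 1 := by
    simp_rw [← forall_signVectors_dotProduct_le_iff]
    simp only [polarSet, signedMaxChains, Finset.coe_disjiUnion, Set.mem_iUnion, Finset.mem_coe]
    exact ⟨fun h C hC d hd ↦ h d ⟨C, hC, hd⟩, fun h d ⟨C, hC, hd⟩ ↦ h C hC d hd⟩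
  rw [hmax]
  refine ⟨fun h C hC ↦ ?_, fun h C hC ↦ h C (isChain_of_mem_maxChains hC)⟩
  obtain ⟨D, hD, hCD⟩ := exists_mem_maxChains_superset C.subset_univ hC
  exact (Finset.sum_le_sum_of_subset_of_nonneg hCD fun i _ _ ↦ abs_nonneg _).trans (h D hD)

open Classical in
lemma exists_isChain_superset_of_support [Finite P] (hx₀ : x ≠ 0)
    (hC : IsChain (· ≤ ·) (C : Set P)) :
    ∃ D : Finset P, IsChain (· ≤ ·) (D : Set P) ∧ {i ∈ C | x i ≠ 0} ⊆ D ∧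
      ∃ a ∈ D, Maximal (x · ≠ 0) a := by
  cases nonempty_fintype P
  obtain ⟨i, hi⟩ := Function.ne_iff.1 hx₀
  have hsuppC : IsChain (· ≤ ·) (({i ∈ C | x i ≠ 0} : Finset P) : Set P) :=
    hC.mono (Finset.coe_subset.2 (Finset.filter_subset _ C))
  obtain ⟨a, ha, hCa⟩ := exists_maximal_forall_le (s := {i | x i ≠ 0}) ⟨i, by simpa using hi⟩
    (Finset.filter_subset_filter _ C.subset_univ) hsuppC
  refine ⟨insert a {i ∈ C | x i ≠ 0}, ?_, Finset.subset_insert _ _, a,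
    Finset.mem_insert_self _ _, by simpa using ha⟩
  rw [Finset.coe_insert]
  exact hsuppC.insert fun i hi _ ↦ .inr (hCa i hi)

lemma sum_abs_sub_smul_le [Fintype P] {r t : ℝ} (hA : ∀ i, Maximal (x · ≠ 0) i → i ∈ A)
    (hx₀ : x ≠ 0) (hv : v ∈ signVectors A) (hvx : ∀ i ∈ A, v i * x i = |x i|) (ht₀ : 0 ≤ t)
    (ht : ∀ i ∈ A, t ≤ |x i|)
    (hx : ∀ C : Finset P, IsChain (· ≤ ·) (C : Set P) → ∑ i ∈ C, |x i| ≤ r)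
    (hC : IsChain (· ≤ ·) (C : Set P)) : ∑ i ∈ C, |(x - t • v) i| ≤ r - t := by
  classical
  have hlower (i : P) (hi : i ∈ A) : |(x - t • v) i| = |x i| - t :=
    abs_sub_mul_of_mem_signVectors hv hi (hvx i hi) (ht i hi)
  have hle (i : P) : |(x - t • v) i| ≤ |x i| := by
    by_cases hi : i ∈ A
    · linarith [hlower i hi]
    · simp [(mem_signVectors.1 hv).2 i hi]
  obtain ⟨D, hD, hCD, a, haD, ha⟩ := exists_isChain_superset_of_support hx₀ hC
  calc
    ∑ i ∈ C, |(x - t • v) i| = ∑ i ∈ C with x i ≠ 0, |(x - t • v) i| := by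
      refine (Finset.sum_filter_of_ne (p := (x · ≠ 0)) fun i _ hi hxi ↦ hi ?_).symm
      simpa only [hxi, abs_zero, abs_nonpos_iff, abs_eq_zero] using hle i
    _ ≤ ∑ i ∈ D, |(x - t • v) i| :=
      Finset.sum_le_sum_of_subset_of_nonneg hCD fun i _ _ ↦ abs_nonneg _
    _ ≤ ∑ i ∈ D, |x i| - t := by
      rw [← Finset.add_sum_erase D _ haD, ← Finset.add_sum_erase D (|x ·|) haD,
        hlower a (hA a ha)]
      have := Finset.sum_le_sum fun i (_ : i ∈ D.erase a) ↦ hle i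
      linarith
    _ ≤ r - t := sub_le_sub_right (hx D hD) t

lemma exists_sub_smul_support_ssubset [Finite P] (hx₀ : x ≠ 0) {r : ℝ}
    (hx : ∀ C : Finset P, IsChain (· ≤ ·) (C : Set P) → ∑ i ∈ C, |x i| ≤ r) :
    ∃ v ∈ enrichedChainVerts P, ∃ t, 0 ≤ t ∧
      (∀ C : Finset P, IsChain (· ≤ ·) (C : Set P) → ∑ i ∈ C, |(x - t • v) i| ≤ r - t) ∧
      Function.support (x - t • v) ⊂ Function.support x := by
  classical
  cases nonempty_fintype P
  set A : Finset P := {i | Maximal (x · ≠ 0) i} with hA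
  have hAmem (i : P) : i ∈ A ↔ Maximal (x · ≠ 0) i := by simp [hA]
  have hAne : A.Nonempty := by
    obtain ⟨i, hi⟩ := Function.ne_iff.1 hx₀
    obtain ⟨m, -, hm⟩ := (Set.toFinite {i | x i ≠ 0}).exists_le_maximal hi
    exact ⟨m, (hAmem m).2 hm⟩
  have hAanti : IsAntichain (· ≤ ·) (A : Set P) := by
    simpa [hA] using setOfPred_maximal_antichain (x · ≠ 0)
  obtain ⟨v, hv, hvx⟩ := exists_mem_signVectors_mul_eq_abs A x
  obtain ⟨a, haA, ha⟩ := A.exists_min_image (|x ·|) hAne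
  refine ⟨v, mem_enrichedChainVerts_of_mem_signVectors hAanti hv, |x a|, abs_nonneg _,
    fun C ↦ sum_abs_sub_smul_le (fun i ↦ (hAmem i).2) hx₀ hv hvx (abs_nonneg _) ha hx, ?_⟩
  refine Set.ssubset_iff_exists.2 ⟨fun i hi hxi ↦ hi ?_, a, ((hAmem a).1 haA).prop, fun h ↦ h ?_⟩
  · have hiA : i ∉ A := fun hiA ↦ ((hAmem i).1 hiA).prop hxi
    simp [hxi, (mem_signVectors.1 hv).2 i hiA]
  · simpa using abs_sub_mul_of_mem_signVectors hv haA (hvx a haA) le_rfl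

lemma mem_smul_convexHull_enrichedChainVerts [Finite P] {r : ℝ}
    (hx : ∀ C : Finset P, IsChain (· ≤ ·) (C : Set P) → ∑ i ∈ C, |x i| ≤ r) :
    x ∈ r • convexHull ℝ (enrichedChainVerts P) := by
  induction h : Function.support x using WellFoundedLT.induction generalizing x r with | _ s ih
  subst h
  by_cases hx₀ : x = 0
  · exact ⟨0, subset_convexHull ℝ _ zero_mem_enrichedChainVerts, by simp [hx₀]⟩
  obtain ⟨v, hv, t, ht, hsum, hsupp⟩ := exists_sub_smul_support_ssubset hx₀ hx
  have hrt : 0 ≤ r - t := by simpa using hsum ∅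
  have hmem := Set.add_mem_add (Set.smul_mem_smul_set (a := t) (subset_convexHull ℝ _ hv))
    (ih _ hsupp hsum rfl)
  rwa [← (convex_convexHull ℝ _).add_smul ht hrt, add_sub_cancel, add_sub_cancel] at hmem

theorem convexHull_enrichedChainVerts_eq_polarSet [Fintype P] :
    convexHull ℝ (enrichedChainVerts P) = polarSet (signedMaxChains P : Set (P → ℝ)) := by
  refine (convexHull_min (fun v hv ↦ ?_) convex_polarSet).antisymm fun x hx ↦ ?_
  · exact mem_polarSet_signedMaxChains.2 fun C hC ↦ sum_abs_le_one_of_mem_enrichedChainVerts hC hv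
  · simpa using mem_smul_convexHull_enrichedChainVerts (mem_polarSet_signedMaxChains.1 hx)

open Classical in
lemma single_mem_faceAt [Fintype P] {d : P → ℝ} (hd : d ∈ signVectors C) {i : P} (hi : i ∈ C) :
    Pi.single i (d i) ∈ faceAt (convexHull ℝ (enrichedChainVerts P)) d := by
  have hdi := (mem_signVectors.1 hd).1 i hi
  refine ⟨subset_convexHull ℝ _ ?_, ?_⟩
  · exact mem_enrichedChainVerts_of_mem_signVectors (by simp) (single_mem_signVectors hdi)
  · rw [dotProduct_single]
    exact mul_self_eq_one_iff.2 hdi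

open Classical in
lemma single_add_single_mem_faceAt [Fintype P] {d : P → ℝ} (hd : d ∈ signVectors C) {i c : P}
    (hi : i ∉ C) (hc : c ∈ C) (hic : ¬ i ≤ c) (hci : ¬ c ≤ i) :
    Pi.single c (d c) + Pi.single i 1 ∈ faceAt (convexHull ℝ (enrichedChainVerts P)) d := by
  have hdc := (mem_signVectors.1 hd).1 c hc
  have hne : c ≠ i := fun h ↦ hci h.le
  refine ⟨subset_convexHull ℝ _ ⟨{c, i}, ?_, ?_, fun j hj ↦ ?_⟩, ?_⟩
  · exact (IsAntichain.singleton).insert (by simp [hic]) (by simp [hci])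
  · simpa [hne, hne.symm] using hdc
  · obtain ⟨hjc, hji⟩ : j ≠ c ∧ j ≠ i := by simpa using hj
    simp [hjc, hji]
  · rw [dotProduct_add, dotProduct_single, dotProduct_single, (mem_signVectors.1 hd).2 i hi,
      mul_self_eq_one_iff.2 hdc, zero_mul, add_zero]

lemma span_faceAt_eq_top [Fintype P] {d : P → ℝ} (hd : d ∈ signedMaxChains P) :
    Submodule.span ℝ (faceAt (convexHull ℝ (enrichedChainVerts P)) d) = ⊤ := by
  classical
  obtain ⟨C, hC, hdC⟩ := Finset.mem_disjiUnion.1 hd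
  rw [eq_top_iff, ← (Pi.basisFun ℝ P).span_eq, Submodule.span_le]
  rintro _ ⟨i, rfl⟩
  rw [Pi.basisFun_apply, SetLike.mem_coe]
  by_cases hi : i ∈ C
  · have hsingle : (Pi.single i 1 : P → ℝ) = d i • Pi.single i (d i) := by
      rw [← Pi.single_smul, smul_eq_mul, mul_self_eq_one_iff.2 ((mem_signVectors.1 hdC).1 i hi)]
    rw [hsingle]
    exact Submodule.smul_mem _ _ (Submodule.subset_span (single_mem_faceAt hdC hi))
  · obtain ⟨c, hc, hic, hci⟩ : ∃ c ∈ C, ¬ i ≤ c ∧ ¬ c ≤ i := by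
      by_contra! hcomp
      exact hi (mem_of_mem_maxChains hC (Finset.mem_univ i) fun c hc ↦
        or_iff_not_imp_left.2 (hcomp c hc))
    rw [← add_sub_cancel_left (Pi.single c (d c)) (Pi.single i 1 : P → ℝ)]
    exact Submodule.sub_mem _
      (Submodule.subset_span (single_add_single_mem_faceAt hdC hi hc hic hci))
      (Submodule.subset_span (single_mem_faceAt hdC hc))

theorem ncard_facets_enrichedChainPolytope [Fintype P] [Nonempty P] :
    {F | IsFacetOf P (convexHull ℝ (enrichedChainVerts P)) F}.ncard =
      ∑ C ∈ maxChains (Finset.univ : Finset P), 2 ^ C.card := by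
  have hspan := fun d ↦ span_faceAt_eq_top (P := P) (d := d)
  rw [convexHull_enrichedChainVerts_eq_polarSet] at hspan ⊢
  rw [ncard_facets_polarSet (signedMaxChains P).finite_toSet hspan, Set.ncard_coe_finset,
    card_signedMaxChains]

end EnrichedChainPolytope

/-- The number of facets of `C^(e)_P` is at most `2^n`, with equality if `P` is
a chain. -/
theorem stmt16 (P : Type*) [Fintype P] [PartialOrder P] [Nonempty P] :
    Set.ncard {F : Set (P → ℝ) | IsFacetOf P (convexHull ℝ (enrichedChainVerts P)) F}
      ≤ 2 ^ Fintype.card P ∧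
    (IsChain (· ≤ ·) (Set.univ : Set P) →
      Set.ncard {F : Set (P → ℝ) | IsFacetOf P (convexHull ℝ (enrichedChainVerts P)) F}
        = 2 ^ Fintype.card P) := by
  rw [ncard_facets_enrichedChainPolytope]
  refine ⟨sum_two_pow_card_maxChains_le Finset.univ, fun hP ↦ ?_⟩
  rw [maxChains_eq_singleton (by simpa using hP), Finset.sum_singleton, Finset.card_univ]
end
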